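/- Fix an integer N̄ ≥ 1 and let T > 0 and ℓ ∈ (0,1). Suppose v ∈ C^∞([0,T]×𝕋³;ℝ³) and g ∈ C^∞([0,T]×𝕋³) satisfy, for all integers N with 1 ≤ N ≤ N̄, the bounds ‖v‖_N ≤ ℓ^{−N} v_F and ‖g‖_N ≤ g_F for some positive constants v_F and g_F. Then there is a constant C, depending only on N̄ and the fixed cutoff function φ, such that for every f ∈ C^∞([0,T]×𝕋³) and every integer N with 0 ≤ N ≤ N̄, ‖[v·∇, P_{≤ℓ^{−1}}](fg) − ([v·∇, P_{≤ℓ^{−1}}]f)·g‖_N ≤ C (ℓ^{1−N} ‖∇f‖₀ + ℓ^{−N} ‖f‖₀) v_F g_F, where [v·∇, P_{≤ℓ^{−1}}]h = v·∇(P_{≤ℓ^{−1}}h) − P_{≤ℓ^{−1}}(v·∇h). -/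

import Mathlib

open MeasureTheory

noncomputable section

/-- Points of `ℝ³`. -/
abbrev V3 : Type := Fin 3 → ℝ

/-- The fundamental domain `[-π, π]³` of the torus `𝕋³`. -/
def T3 : Set V3 := Set.Icc (fun _ => -Real.pi) (fun _ => Real.pi)

/-- The `i`-th standard basis vector of `ℝ³`. -/
def e3 (i : Fin 3) : V3 := Pi.single i 1

/-- A time-dependent function on `ℝ³` is (`2π`-)periodic in space. -/
def PerSpaceT {α : Type*} (f : ℝ × V3 → α) : Prop :=
  ∀ (t : ℝ) (x : V3) (v : Fin 3 → ℤ), f (t, fun i => x i + 2 * Real.pi * v i) = f (t, x)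

/-- Partial derivative in the `i`-th space direction. -/
def pX {F : Type*} [NormedAddCommGroup F] [NormedSpace ℝ F]
    (i : Fin 3) (f : ℝ × V3 → F) (tx : ℝ × V3) : F :=
  fderiv ℝ (fun y => f (tx.1, y)) tx.2 (e3 i)

/-- The Euclidean norm on `ℝ³`. -/
def enorm3 (x : V3) : ℝ := Real.sqrt (∑ i, x i ^ 2)

/-- `Jof S` is the largest integer `J` with `2^J ≤ S`. -/
def Jof (S : ℝ) : ℤ := ⌊Real.logb 2 S⌋

/-- The `k`-th Fourier coefficient of a (`2π`-)periodic function on `ℝ³`. -/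
def fcoef (g : V3 → ℝ) (k : Fin 3 → ℤ) : ℂ :=
  (((2 * Real.pi) ^ (3 : ℕ))⁻¹ : ℝ) •
    ∫ x in T3, (g x : ℂ) * Complex.exp (-(Complex.I * ((∑ i, (k i : ℝ) * x i : ℝ) : ℂ)))

/-- The low-frequency cutoff `P_{≤S}` associated with the cutoff function `φ`. -/
def Pse (φ : V3 → ℝ) (S : ℝ) (g : V3 → ℝ) (x : V3) : ℝ :=
  (∑' k : Fin 3 → ℤ,
      ((φ (fun i => (k i : ℝ) / (2 : ℝ) ^ Jof S) : ℝ) : ℂ) * fcoef g k *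
        Complex.exp (Complex.I * ((∑ i, (k i : ℝ) * x i : ℝ) : ℂ))).re

/-- `P_{≤S}` applied in the space variable to a time-dependent function. -/
def PseT (φ : V3 → ℝ) (S : ℝ) (f : ℝ × V3 → ℝ) (tx : ℝ × V3) : ℝ :=
  Pse φ S (fun y => f (tx.1, y)) tx.2

/-- The hypotheses on the fixed cutoff function `φ`. -/
def IsCutoff (φ : V3 → ℝ) : Prop :=
  ContDiff ℝ (⊤ : ℕ∞) φ ∧ (∀ x y : V3, enorm3 x = enorm3 y → φ x = φ y) ∧
    (∀ x : V3, enorm3 x ≤ 1 → φ x = 1) ∧ (∀ x : V3, 2 ≤ enorm3 x → φ x = 0)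

/-- The commutator `[g, P_{≤ℓ⁻¹}] f = g · P_{≤ℓ⁻¹} f - P_{≤ℓ⁻¹}(g f)`. -/
def commMul (φ : V3 → ℝ) (ℓ : ℝ) (g f : ℝ × V3 → ℝ) (tx : ℝ × V3) : ℝ :=
  g tx * PseT φ ℓ⁻¹ f tx - PseT φ ℓ⁻¹ (fun s => g s * f s) tx

/-- The commutator `[v·∇, P_{≤ℓ⁻¹}] F = v·∇(P_{≤ℓ⁻¹}F) - P_{≤ℓ⁻¹}(v·∇F)`. -/
def commAdv (φ : V3 → ℝ) (ℓ : ℝ) (v : ℝ × V3 → V3) (F : ℝ × V3 → ℝ) (tx : ℝ × V3) : ℝ :=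
  (∑ i : Fin 3, v tx i * pX i (PseT φ ℓ⁻¹ F) tx)
    - PseT φ ℓ⁻¹ (fun s => ∑ i : Fin 3, v s i * pX i F s) tx

/-- The commutator `[v·∇, P_{>ℓ⁻¹}] F` with the high-frequency cutoff `P_{>S} = id - P_{≤S}`. -/
def commAdvHigh (φ : V3 → ℝ) (ℓ : ℝ) (v : ℝ × V3 → V3) (F : ℝ × V3 → ℝ) (tx : ℝ × V3) : ℝ :=
  (∑ i : Fin 3, v tx i * pX i (fun s => F s - PseT φ ℓ⁻¹ F s) tx)
    - ((∑ i : Fin 3, v tx i * pX i F tx)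
        - PseT φ ℓ⁻¹ (fun s => ∑ i : Fin 3, v s i * pX i F s) tx)

/-!
The double commutator depends on `v` and `g` only modulo additive constants, so at a given point `x`
both may be assumed to vanish. Then `v y` and `g y` are bounded by `|y - x|` times `ℓ⁻¹ v_F` and
`g_F`. The convolution kernel of `P_{≤ℓ⁻¹}` decays at the length scale `ℓ`, so each factor `|y - x|`
in front of it is worth a factor `ℓ`, and each derivative falling on it costs a factor `ℓ⁻¹`. Since
the kernel is a trigonometric polynomial with coefficients `φ (k / 2 ^ J)`, its decay follows from
summation by parts in `k`: a difference of the coefficients gains `2 ^ (-J)` from the smoothness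
of `φ` and multiplies the kernel by `exp (-i yⱼ) - 1`.
-/

section TorusCharacters

variable {d : ℕ}

/-- The linear form `x ↦ ξ · x` on `ℝᵈ`. -/
def dotCLM (ξ : Fin d → ℝ) : (Fin d → ℝ) →L[ℝ] ℝ := ∑ i, ξ i • ContinuousLinearMap.proj i

theorem dotCLM_apply (ξ x : Fin d → ℝ) : dotCLM ξ x = ∑ i, ξ i * x i := by
  simp [dotCLM]

theorem dotCLM_add_left (ξ η x : Fin d → ℝ) : dotCLM (ξ + η) x = dotCLM ξ x + dotCLM η x := by
  simp only [dotCLM_apply, Pi.add_apply, add_mul, Finset.sum_add_distrib]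

theorem dotCLM_smul (c : ℝ) (ξ : Fin d → ℝ) : dotCLM (c • ξ) = c • dotCLM ξ := by
  ext x
  simp [dotCLM_apply, mul_assoc, Finset.mul_sum]

theorem contDiff_dotCLM {n : WithTop ℕ∞} :
    ContDiff ℝ n (dotCLM : (Fin d → ℝ) → (Fin d → ℝ) →L[ℝ] ℝ) :=
  ContDiff.sum fun i _ => (contDiff_apply ℝ ℝ i).smul contDiff_const

/-- The character `x ↦ exp (i k·x)` of the torus `(ℝ / 2πℤ)ᵈ`, as a function on `ℝᵈ`. -/
def torusChar (k : Fin d → ℤ) (x : Fin d → ℝ) : ℂ :=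
  Complex.exp (Complex.I * (dotCLM (fun i => (k i : ℝ)) x : ℂ))

theorem norm_torusChar (k : Fin d → ℤ) (x : Fin d → ℝ) : ‖torusChar k x‖ = 1 := by
  rw [torusChar, mul_comm, Complex.norm_exp_ofReal_mul_I]

theorem torusChar_zero_right (k : Fin d → ℤ) : torusChar k 0 = 1 := by
  simp [torusChar]

theorem torusChar_add_right (k : Fin d → ℤ) (x y : Fin d → ℝ) :
    torusChar k (x + y) = torusChar k x * torusChar k y := by
  rw [torusChar, map_add, Complex.ofReal_add, mul_add, Complex.exp_add, torusChar, torusChar]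

theorem torusChar_add_left (k m : Fin d → ℤ) (x : Fin d → ℝ) :
    torusChar (k + m) x = torusChar k x * torusChar m x := by
  have hcast : (fun i => (((k + m) i : ℤ) : ℝ)) = (fun i => (k i : ℝ)) + fun i => (m i : ℝ) := by
    ext i
    simp
  rw [torusChar, hcast, dotCLM_add_left, Complex.ofReal_add, mul_add, Complex.exp_add, torusChar,
    torusChar]

theorem torusChar_mul_neg (k : Fin d → ℤ) (x : Fin d → ℝ) :
    torusChar k x * torusChar k (-x) = 1 := by
  rw [← torusChar_add_right, add_neg_cancel, torusChar_zero_right]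

theorem hasFDerivAt_torusChar (k : Fin d → ℤ) (x : Fin d → ℝ) :
    HasFDerivAt (torusChar k)
      ((dotCLM fun i => (k i : ℝ)).smulRight (Complex.I * torusChar k x)) x := by
  have hphase : HasFDerivAt (fun y => Complex.I * (dotCLM (fun i => (k i : ℝ)) y : ℂ))
      (Complex.I • Complex.ofRealCLM.comp (dotCLM fun i => (k i : ℝ))) x :=
    (Complex.ofRealCLM.hasFDerivAt.comp x
      (dotCLM fun i => (k i : ℝ)).hasFDerivAt).const_mul Complex.I
  refine hphase.cexp.congr_fderiv ?_
  ext w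
  simp only [torusChar, smul_apply, ContinuousLinearMap.comp_apply, Complex.ofRealCLM_apply,
    smul_eq_mul, ContinuousLinearMap.smulRight_apply, Complex.real_smul]
  ring

theorem contDiff_torusChar (k : Fin d → ℤ) {n : WithTop ℕ∞} : ContDiff ℝ n (torusChar k) :=
  Complex.contDiff_exp.comp (contDiff_const.mul (Complex.ofRealCLM.contDiff.comp
    (dotCLM fun i => (k i : ℝ)).contDiff))

@[fun_prop]
theorem continuous_torusChar (k : Fin d → ℤ) : Continuous (torusChar k) :=
  (contDiff_torusChar k (n := 0)).continuous

/-- Functions on `ℝᵈ` that are `2π`-periodic in every coordinate. -/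
def TorusPeriodic {α : Type*} (f : (Fin d → ℝ) → α) : Prop :=
  ∀ (x : Fin d → ℝ) (n : Fin d → ℤ), f (fun i => x i + 2 * Real.pi * n i) = f x

theorem TorusPeriodic.comp₂ {α β γ : Type*} {f : (Fin d → ℝ) → α} {g : (Fin d → ℝ) → β}
    (hf : TorusPeriodic f) (hg : TorusPeriodic g) (op : α → β → γ) :
    TorusPeriodic fun x => op (f x) (g x) := fun x n =>
  congrArg₂ op (hf x n) (hg x n)

theorem torusPeriodic_fderiv {E : Type*} [NormedAddCommGroup E] [NormedSpace ℝ E]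
    {f : (Fin d → ℝ) → E} (hf : TorusPeriodic f) : TorusPeriodic (fderiv ℝ f) := fun x n => by
  have hshift : (fun y => f (y + fun i => 2 * Real.pi * n i)) = f := funext fun y => hf y n
  conv_rhs => rw [← hshift, fderiv_comp_add_right]
  rfl

theorem torusPeriodic_torusChar (k : Fin d → ℤ) : TorusPeriodic (torusChar k) := fun x n => by
  have hphase : dotCLM (fun i => (k i : ℝ)) (fun i => x i + 2 * Real.pi * n i)
      = dotCLM (fun i => (k i : ℝ)) x + (∑ i, k i * n i : ℤ) * (2 * Real.pi) := by
    simp only [dotCLM_apply, mul_add, Finset.sum_add_distrib, Int.cast_sum, Int.cast_mul,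
      Finset.sum_mul]
    congr! 2
    ring
  have hexp := Complex.exp_int_mul_two_pi_mul_I (∑ i, k i * n i)
  rw [torusChar, hphase, torusChar, Complex.ofReal_add, mul_add, Complex.exp_add,
    mul_eq_left₀ (Complex.exp_ne_zero _), ← hexp]
  push_cast
  ring_nf

theorem torusPeriodic_torusChar_neg (k : Fin d → ℤ) :
    TorusPeriodic fun x => torusChar k (-x) := fun x n => by
  have hneg : -(fun i => x i + 2 * Real.pi * n i) = fun i => (-x) i + 2 * Real.pi * (-n) i := by
    ext i
    simp only [Pi.neg_apply, Int.cast_neg]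
    ring
  exact (congrArg (torusChar k) hneg).trans (torusPeriodic_torusChar k (-x) (-n))

end TorusCharacters

section PeriodIntegrals

variable {d : ℕ} {E : Type*} [NormedAddCommGroup E]

/-- The period cell `[-π, π]ᵈ`. -/
def periodCube (d : ℕ) : Set (Fin d → ℝ) := Set.Icc (fun _ => -Real.pi) (fun _ => Real.pi)

theorem norm_le_pi_of_mem_periodCube {y : Fin d → ℝ} (hy : y ∈ periodCube d) : ‖y‖ ≤ Real.pi :=
  (pi_norm_le_iff_of_nonneg Real.pi_pos.le).2 fun i => abs_le.2 ⟨hy.1 i, hy.2 i⟩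

theorem measurableSet_periodCube : MeasurableSet (periodCube d) := measurableSet_Icc

theorem isCompact_periodCube : IsCompact (periodCube d) := isCompact_Icc

theorem integrableOn_periodCube {f : (Fin d → ℝ) → E} (hf : Continuous f) :
    IntegrableOn f (periodCube d) :=
  hf.continuousOn.integrableOn_compact isCompact_periodCube

/-- The basis `2π eᵢ` of the period lattice. -/
def periodBasis (d : ℕ) : Module.Basis (Fin d) ℝ (Fin d → ℝ) :=
  (Pi.basisFun ℝ (Fin d)).isUnitSMul (w := fun _ => 2 * Real.pi)
    (fun _ => IsUnit.mk0 _ Real.two_pi_pos.ne')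

theorem periodBasis_apply (i : Fin d) : periodBasis d i = (2 * Real.pi) • Pi.single i 1 := by
  simp [periodBasis, Module.Basis.isUnitSMul_apply]

theorem periodBasis_repr (x : Fin d → ℝ) (i : Fin d) :
    (periodBasis d).repr x i = x i / (2 * Real.pi) := by
  simp [periodBasis, Module.Basis.repr_isUnitSMul, Units.smul_def, div_eq_inv_mul]

open scoped Pointwise in
theorem vadd_fundamentalDomain_periodBasis (a : Fin d → ℝ) :
    a +ᵥ ZSpan.fundamentalDomain (periodBasis d)
      = Set.univ.pi fun i => Set.Ico (a i) (a i + 2 * Real.pi) := by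
  ext x
  simp only [Set.mem_vadd_set_iff_neg_vadd_mem, ZSpan.mem_fundamentalDomain, periodBasis_repr,
    Set.mem_univ_pi, Set.mem_Ico, vadd_eq_add, Pi.add_apply, Pi.neg_apply,
    div_lt_one Real.two_pi_pos]
  refine forall_congr' fun i => and_congr ?_ (by rw [neg_add_lt_iff_lt_add])
  rw [le_div_iff₀ Real.two_pi_pos, zero_mul, neg_add_eq_sub, sub_nonneg]

open scoped Pointwise in
theorem periodCube_ae_eq_vadd_fundamentalDomain :
    periodCube d =ᵐ[volume]
      ((fun _ => -Real.pi : Fin d → ℝ) +ᵥ ZSpan.fundamentalDomain (periodBasis d) :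
        Set (Fin d → ℝ)) := by
  have hright : -Real.pi + 2 * Real.pi = Real.pi := by ring
  rw [vadd_fundamentalDomain_periodBasis, periodCube, hright]
  exact (Measure.univ_pi_Ico_ae_eq_Icc (μ := fun _ : Fin d => (volume : Measure ℝ))).symm

variable [NormedSpace ℝ E]

open scoped Pointwise in
theorem TorusPeriodic.setIntegral_vadd_fundamentalDomain {f : (Fin d → ℝ) → E}
    (hf : TorusPeriodic f) (a b : Fin d → ℝ) :
    ∫ x in a +ᵥ ZSpan.fundamentalDomain (periodBasis d), f x
      = ∫ x in b +ᵥ ZSpan.fundamentalDomain (periodBasis d), f x := by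
  have hdom := ZSpan.isAddFundamentalDomain (periodBasis d) (volume : Measure (Fin d → ℝ))
  have : VAddInvariantMeasure (Submodule.span ℤ (Set.range (periodBasis d))) (Fin d → ℝ) volume :=
    ⟨fun c s _ => measure_preimage_add volume (c : Fin d → ℝ) s⟩
  refine (hdom.vadd_of_comm a).setIntegral_eq (hdom.vadd_of_comm b) ?_
  rintro ⟨g, hg⟩ x
  obtain ⟨c, rfl⟩ := (Submodule.mem_span_range_iff_exists_fun ℤ).1 hg
  rw [← hf x c]
  congr 1
  ext i
  simp [Submodule.vadd_def, periodBasis_apply, Pi.single_apply, add_comm, mul_comm]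

open scoped Pointwise in
theorem TorusPeriodic.setIntegral_periodCube_add {f : (Fin d → ℝ) → E} (hf : TorusPeriodic f)
    (a : Fin d → ℝ) : ∫ x in periodCube d, f (a + x) = ∫ x in periodCube d, f x := by
  simp only [setIntegral_congr_set periodCube_ae_eq_vadd_fundamentalDomain]
  rw [hf.setIntegral_vadd_fundamentalDomain _ (a + fun _ => -Real.pi), ← vadd_eq_add, vadd_assoc,
    ← Set.image_vadd (a := a),
    (measurePreserving_vadd a volume).setIntegral_image_emb (measurableEmbedding_const_vadd a)]
  rfl

theorem integral_fderiv_segment_eq_sub {V : Type*} [NormedAddCommGroup V] [NormedSpace ℝ V]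
    [CompleteSpace E] {F : V → E} (hF : ContDiff ℝ 1 F) (x w : V) :
    ∫ s in (0 : ℝ)..1, fderiv ℝ F (s • w + x) w = F (w + x) - F x := by
  have hderiv : ∀ s : ℝ, HasDerivAt (F ∘ fun s : ℝ => s • w + x) (fderiv ℝ F (s • w + x) w) s :=
    fun s => by
      simpa using ((hF.differentiable one_ne_zero).differentiableAt.hasFDerivAt).comp_hasDerivAt s
        (((hasDerivAt_id s).smul_const w).add_const x)
  have hcont : Continuous fun s : ℝ => fderiv ℝ F (s • w + x) w :=
    ((hF.continuous_fderiv one_ne_zero).comp (by fun_prop)).clm_apply continuous_const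
  rw [intervalIntegral.integral_eq_sub_of_hasDerivAt (fun s _ => hderiv s)
    (hcont.intervalIntegrable 0 1), Function.comp_apply, Function.comp_apply, one_smul,
    zero_smul, zero_add]

-- The integral of `F (w + x) - F x` over a period vanishes, and this difference is
-- `∫₀¹ F' (s w + x) w ds`: exchange the two integrals.
theorem TorusPeriodic.setIntegral_fderiv_eq_zero [CompleteSpace E] {F : (Fin d → ℝ) → E}
    (hF : ContDiff ℝ 1 F) (hp : TorusPeriodic F) (w : Fin d → ℝ) :
    ∫ x in periodCube d, fderiv ℝ F x w = 0 := by
  have hper : TorusPeriodic fun x => fderiv ℝ F x w := fun x n =>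
    congrArg (fun A : (Fin d → ℝ) →L[ℝ] E => A w) (torusPeriodic_fderiv hp x n)
  have hcont : Continuous fun p : ℝ × (Fin d → ℝ) => fderiv ℝ F (p.1 • w + p.2) w :=
    ((hF.continuous_fderiv one_ne_zero).comp (by fun_prop)).clm_apply continuous_const
  have hintegrable : Integrable (Function.uncurry fun (s : ℝ) x => fderiv ℝ F (s • w + x) w)
      ((volume.restrict (Set.uIoc 0 1)).prod (volume.restrict (periodCube d))) := by
    rw [Measure.prod_restrict]
    exact (hcont.continuousOn.integrableOn_compact
      (isCompact_uIcc.prod isCompact_periodCube)).mono_set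
        (Set.prod_mono_left Set.uIoc_subset_uIcc)
  calc ∫ x in periodCube d, fderiv ℝ F x w
      = ∫ s in (0 : ℝ)..1, ∫ x in periodCube d, fderiv ℝ F (s • w + x) w := by
        simp only [hper.setIntegral_periodCube_add, intervalIntegral.integral_const, sub_zero,
          one_smul]
    _ = ∫ x in periodCube d, ∫ s in (0 : ℝ)..1, fderiv ℝ F (s • w + x) w :=
        intervalIntegral_integral_swap hintegrable
    _ = ∫ x in periodCube d, (F (w + x) - F x) := by
        simp only [integral_fderiv_segment_eq_sub hF]
    _ = 0 := by
        have := hF.continuous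
        rw [integral_sub (integrableOn_periodCube (by fun_prop))
          (integrableOn_periodCube this), hp.setIntegral_periodCube_add, sub_self]

end PeriodIntegrals

section IteratedDifferences

variable {E F : Type*} [NormedAddCommGroup E] [NormedAddCommGroup F]

theorem fwdDiff_iter_eq_zero_of_le_norm (n : ℕ) {ψ : E → F} {R : ℝ}
    (hψ : ∀ x, R ≤ ‖x‖ → ψ x = 0) {h : E} (hh : ‖h‖ ≤ 1) {x : E} (hx : R + n ≤ ‖x‖) :
    (fwdDiff h)^[n] ψ x = 0 := by
  induction n generalizing x with
  | zero => exact hψ x (by simpa using hx)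
  | succ n ih =>
    push_cast at hx
    have hshift : ‖x‖ - ‖h‖ ≤ ‖x + h‖ := norm_sub_le_norm_add x h
    rw [Function.iterate_succ_apply', fwdDiff, ih (by linarith), ih (by linarith), sub_self]

variable [NormedSpace ℝ E] [NormedSpace ℝ F]

theorem norm_add_sub_le_of_norm_fderiv_le {f : E → F} (hf : Differentiable ℝ f) {C : ℝ}
    (hC : ∀ z, ‖fderiv ℝ f z‖ ≤ C) (x h : E) : ‖f (x + h) - f x‖ ≤ C * ‖h‖ := by
  simpa using Convex.norm_image_sub_le_of_norm_fderiv_le (fun z _ => hf z) (fun z _ => hC z)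
    convex_univ (Set.mem_univ x) (Set.mem_univ (x + h))

theorem norm_iteratedFDeriv_fwdDiff_le {n : ℕ} {ψ : E → F} (hψ : ContDiff ℝ (n + 1) ψ) {B : ℝ}
    (hB : ∀ x, ‖iteratedFDeriv ℝ (n + 1) ψ x‖ ≤ B) (h x : E) :
    ‖iteratedFDeriv ℝ n (fwdDiff h ψ) x‖ ≤ B * ‖h‖ := by
  have hn : ContDiff ℝ n ψ := hψ.of_le (by exact_mod_cast n.le_succ)
  have hcomm : iteratedFDeriv ℝ n (fwdDiff h ψ) x
      = iteratedFDeriv ℝ n ψ (x + h) - iteratedFDeriv ℝ n ψ x := by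
    rw [← iteratedFDeriv_comp_add_right]
    exact iteratedFDeriv_sub_apply (hn.comp (contDiff_id.add contDiff_const)).contDiffAt
      hn.contDiffAt
  rw [hcomm]
  exact norm_add_sub_le_of_norm_fderiv_le
    (hψ.differentiable_iteratedFDeriv (by exact_mod_cast n.lt_succ_self))
    (fun z => norm_fderiv_iteratedFDeriv.trans_le (hB z)) x h

theorem norm_fwdDiff_iter_le (n : ℕ) {ψ : E → F} (hψ : ContDiff ℝ n ψ) {B : ℝ}
    (hB : ∀ x, ‖iteratedFDeriv ℝ n ψ x‖ ≤ B) (h x : E) :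
    ‖(fwdDiff h)^[n] ψ x‖ ≤ B * ‖h‖ ^ n := by
  induction n generalizing ψ B with
  | zero => simpa using hB x
  | succ n ih =>
    have hn : ContDiff ℝ n ψ := hψ.of_le (by exact_mod_cast n.le_succ)
    rw [Function.iterate_succ_apply, pow_succ', ← mul_assoc]
    exact ih ((hn.comp (contDiff_id.add contDiff_const)).sub hn)
      (norm_iteratedFDeriv_fwdDiff_le hψ hB h)

end IteratedDifferences

section LatticeBoxes

variable {d : ℕ} {E : Type*}

/-- The lattice points of the cube `[-M, M]ᵈ`. -/
def latticeBox (d : ℕ) (M : ℝ) : Finset (Fin d → ℤ) :=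
  Fintype.piFinset fun _ => Finset.Icc (-⌊M⌋) ⌊M⌋

theorem mem_latticeBox {M : ℝ} {k : Fin d → ℤ} : k ∈ latticeBox d M ↔ ∀ i, |(k i : ℝ)| ≤ M := by
  simp only [latticeBox, Fintype.mem_piFinset, Finset.mem_Icc, ← abs_le]
  simp only [Int.le_floor, Int.cast_abs]

theorem card_latticeBox_le {M : ℝ} (hM : 0 ≤ M) :
    ((latticeBox d M).card : ℝ) ≤ (2 * M + 1) ^ d := by
  have hside : ((⌊M⌋ + 1 - -⌊M⌋).toNat : ℤ) = 2 * ⌊M⌋ + 1 := by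
    have := Int.floor_nonneg.2 hM
    omega
  have hsideR : ((⌊M⌋ + 1 - -⌊M⌋).toNat : ℝ) = 2 * ⌊M⌋ + 1 := by exact_mod_cast hside
  simp only [latticeBox, Fintype.card_piFinset, Int.card_Icc, Finset.prod_const, Finset.card_univ,
    Fintype.card_fin, Nat.cast_pow, hsideR]
  have : (0 : ℝ) ≤ ⌊M⌋ := by exact_mod_cast Int.floor_nonneg.2 hM
  gcongr
  exact Int.floor_le M

/-- The frequency `k / L`. -/
def scaledFreq (L : ℝ) (k : Fin d → ℤ) : Fin d → ℝ := fun i => (k i : ℝ) / L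

theorem scaledFreq_add (L : ℝ) (k m : Fin d → ℤ) :
    scaledFreq L (k + m) = scaledFreq L k + scaledFreq L m := by
  ext i
  simp [scaledFreq, add_div]

theorem norm_scaledFreq_single {L : ℝ} (hL : 0 < L) (j : Fin d) :
    ‖scaledFreq L (Pi.single j 1)‖ = L⁻¹ := by
  have hsingle : scaledFreq L (Pi.single j 1) = Pi.single j L⁻¹ := by
    ext i
    rcases eq_or_ne i j with rfl | hij
    · simp [scaledFreq]
    · simp [scaledFreq, hij]
  rw [hsingle, Pi.norm_single, Real.norm_of_nonneg (by positivity)]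

theorem fwdDiff_iter_comp_scaledFreq [AddCommGroup E] (ψ : (Fin d → ℝ) → E) (L : ℝ)
    (m k : Fin d → ℤ) (n : ℕ) :
    (fwdDiff m)^[n] (fun k => ψ (scaledFreq L k)) k
      = (fwdDiff (scaledFreq L m))^[n] ψ (scaledFreq L k) := by
  induction n generalizing k with
  | zero => rfl
  | succ n ih => simp only [Function.iterate_succ_apply', fwdDiff, ih, scaledFreq_add]

theorem comp_scaledFreq_eq_zero [Zero E] {Ψ : (Fin d → ℝ) → E} {L R : ℝ} (hL : 0 < L)
    (hΨ : ∀ ξ, R ≤ ‖ξ‖ → Ψ ξ = 0) {k : Fin d → ℤ} (hk : k ∉ latticeBox d (R * L)) :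
    Ψ (scaledFreq L k) = 0 := by
  refine hΨ _ (le_of_not_ge fun h => hk (mem_latticeBox.2 fun i => ?_))
  have hi : |(k i : ℝ) / L| ≤ R := (norm_le_pi_norm (scaledFreq L k) i).trans h
  rwa [abs_div, abs_of_pos hL, div_le_iff₀ hL] at hi

theorem support_comp_scaledFreq_finite [Zero E] {Ψ : (Fin d → ℝ) → E} {L R : ℝ} (hL : 0 < L)
    (hΨ : ∀ ξ, R ≤ ‖ξ‖ → Ψ ξ = 0) : (fun k => Ψ (scaledFreq L k)).support.Finite :=
  (latticeBox d (R * L)).finite_toSet.subset fun _ hk =>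
    by_contra fun h => hk (comp_scaledFreq_eq_zero hL hΨ h)

end LatticeBoxes

section KernelDecay

variable {d : ℕ} {E : Type*} [NormedAddCommGroup E] [NormedSpace ℂ E]

/-- The trigonometric series on the torus with coefficients `c`: the convolution kernel of the
Fourier multiplier `c`. -/
def torusKernel (c : (Fin d → ℤ) → E) (y : Fin d → ℝ) : E := ∑' k, torusChar k y • c k

theorem torusKernel_fwdDiff {c : (Fin d → ℤ) → E} (hc : c.support.Finite) (m : Fin d → ℤ)
    (y : Fin d → ℝ) : torusKernel (fwdDiff m c) y = (torusChar m (-y) - 1) • torusKernel c y := by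
  have hsummable : Summable fun k => torusChar k y • c k :=
    summable_of_hasFiniteSupport (hc.subset fun k hk h => hk (by simp [h]))
  have hshift : HasSum (fun k => torusChar (k + m) y • c (k + m)) (torusKernel c y) :=
    (Equiv.addRight m).hasSum_iff.2 hsummable.hasSum
  have hterm : ∀ k, torusChar k y • fwdDiff m c k
      = torusChar m (-y) • torusChar (k + m) y • c (k + m) - torusChar k y • c k := fun k => by
    rw [fwdDiff, smul_sub, torusChar_add_left, smul_smul, mul_left_comm, mul_comm (torusChar m _),
      torusChar_mul_neg, mul_one]
  simp only [torusKernel, hterm, sub_smul, one_smul]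
  exact ((hshift.const_smul _).sub hsummable.hasSum).tsum_eq

theorem torusKernel_fwdDiff_iter {c : (Fin d → ℤ) → E} (hc : c.support.Finite)
    (m : Fin d → ℤ) (y : Fin d → ℝ) (n : ℕ) :
    torusKernel ((fwdDiff m)^[n] c) y = (torusChar m (-y) - 1) ^ n • torusKernel c y := by
  induction n generalizing c with
  | zero => simp
  | succ n ih =>
    have hdiff : (fwdDiff m c).support.Finite := by
      refine ((hc.preimage (add_left_injective m).injOn).union hc).subset fun k hk => ?_
      contrapose! hk
      simp_all [fwdDiff]
    rw [Function.iterate_succ_apply, ih hdiff, torusKernel_fwdDiff hc, smul_smul, pow_succ]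

theorem norm_torusKernel_le {c : (Fin d → ℤ) → E} {M B : ℝ} (hM : 0 ≤ M)
    (hc : ∀ k ∉ latticeBox d M, c k = 0) (hB : ∀ k, ‖c k‖ ≤ B) (y : Fin d → ℝ) :
    ‖torusKernel c y‖ ≤ (2 * M + 1) ^ d * B := by
  have hB0 : 0 ≤ B := (norm_nonneg _).trans (hB 0)
  rw [torusKernel, tsum_eq_sum fun _ hk => by rw [hc _ hk, smul_zero]]
  calc ‖∑ k ∈ latticeBox d M, torusChar k y • c k‖ ≤ ∑ _ ∈ latticeBox d M, B :=
        norm_sum_le_of_le _ fun _ _ => by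
          rw [norm_smul, norm_torusChar, one_mul]
          exact hB _
    _ = (latticeBox d M).card * B := by rw [Finset.sum_const, nsmul_eq_mul]
    _ ≤ (2 * M + 1) ^ d * B := by
        gcongr
        exact card_latticeBox_le hM

theorem two_div_pi_mul_abs_le_norm_torusChar_sub_one {j : Fin d} {y : Fin d → ℝ}
    (hy : |y j| ≤ Real.pi) :
    2 / Real.pi * |y j| ≤ ‖torusChar (Pi.single j 1) (-y) - 1‖ := by
  have hchar : torusChar (Pi.single j 1) (-y) = Complex.exp (Complex.I * ((-(y j) : ℝ) : ℂ)) := by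
    rw [torusChar, dotCLM_apply]
    congr 3
    simp [Pi.single_apply]
  have habs : |-(y j) / 2| = |y j| / 2 := by rw [abs_div, abs_neg, Nat.abs_ofNat]
  have hsin := Real.mul_abs_le_abs_sin (x := -(y j) / 2) (by linarith)
  rw [habs] at hsin
  rw [hchar, Complex.norm_exp_I_mul_ofReal_sub_one, norm_mul, Real.norm_eq_abs, Real.norm_eq_abs,
    Nat.abs_ofNat]
  linarith

theorem exists_norm_eq_abs_apply [NeZero d] (y : Fin d → ℝ) : ∃ j, ‖y‖ = |y j| := by
  obtain ⟨j, hj⟩ := Finite.exists_max fun i => ‖y i‖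
  exact ⟨j, le_antisymm ((pi_norm_le_iff_of_nonneg (norm_nonneg _)).2 hj) (norm_le_pi_norm y j)⟩

variable [NormedSpace ℝ E] {Ψ : (Fin d → ℝ) → E}

theorem norm_torusKernel_fwdDiff_iter_le {n : ℕ} (hΨ : ContDiff ℝ n Ψ) {R : ℝ} (hR0 : 0 ≤ R)
    (hR : ∀ ξ, R ≤ ‖ξ‖ → Ψ ξ = 0) {B : ℝ} (hB : ∀ ξ, ‖iteratedFDeriv ℝ n Ψ ξ‖ ≤ B) {L : ℝ}
    (hL : 1 ≤ L) (j : Fin d) (y : Fin d → ℝ) :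
    ‖torusKernel ((fwdDiff (Pi.single j 1))^[n] fun k => Ψ (scaledFreq L k)) y‖
      ≤ (2 * ((R + n) * L) + 1) ^ d * (B * L⁻¹ ^ n) := by
  have hL0 : 0 < L := by linarith
  have hstep := norm_scaledFreq_single hL0 j
  refine norm_torusKernel_le (by positivity) (fun k hk => ?_) (fun k => ?_) y
  · rw [fwdDiff_iter_comp_scaledFreq]
    refine comp_scaledFreq_eq_zero hL0 (fun ξ hξ => ?_) hk
    exact fwdDiff_iter_eq_zero_of_le_norm n hR (hstep.trans_le (inv_le_one_of_one_le₀ hL)) hξ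
  · rw [fwdDiff_iter_comp_scaledFreq, ← hstep]
    exact norm_fwdDiff_iter_le n hΨ hB _ _

-- Summation by parts: `n` differences of the coefficients multiply the kernel by a factor of size
-- at least `‖y‖ ^ n`, up to a constant, while each difference of `Ψ (· / L)` gains `L⁻¹`.
theorem exists_pow_mul_norm_torusKernel_le [NeZero d] {n : ℕ} (hΨ : ContDiff ℝ n Ψ)
    (hs : HasCompactSupport Ψ) :
    ∃ C : ℝ, 0 ≤ C ∧ ∀ L : ℝ, 1 ≤ L → ∀ y : Fin d → ℝ, ‖y‖ ≤ Real.pi →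
      (L * ‖y‖) ^ n * ‖torusKernel (fun k => Ψ (scaledFreq L k)) y‖ ≤ C * L ^ d := by
  obtain ⟨R, hR0, hR⟩ := hs.exists_pos_le_norm
  obtain ⟨B, hB⟩ := (hs.iteratedFDeriv (𝕜 := ℝ) n).exists_bound_of_continuous
    (hΨ.continuous_iteratedFDeriv le_rfl)
  have hB0 : 0 ≤ B := (norm_nonneg _).trans (hB 0)
  refine ⟨(Real.pi / 2) ^ n * ((2 * (R + n) + 1) ^ d * B), by positivity, fun L hL y hy => ?_⟩
  have hL0 : 0 < L := by linarith
  have := Real.pi_pos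
  obtain ⟨j, hj⟩ := exists_norm_eq_abs_apply y
  have hchar := two_div_pi_mul_abs_le_norm_torusChar_sub_one (hj ▸ hy)
  rw [← hj] at hchar
  have hdiff := norm_torusKernel_fwdDiff_iter_le hΨ hR0.le hR hB hL j y
  rw [torusKernel_fwdDiff_iter (support_comp_scaledFreq_finite hL0 hR), norm_smul,
    norm_pow] at hdiff
  set K := ‖torusKernel (fun k => Ψ (scaledFreq L k)) y‖
  calc (L * ‖y‖) ^ n * K
      = (Real.pi / 2) ^ n * L ^ n * ((2 / Real.pi * ‖y‖) ^ n * K) := by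
        rw [← mul_assoc, ← mul_pow, ← mul_pow]
        congr 2
        field_simp
    _ ≤ (Real.pi / 2) ^ n * L ^ n * ((2 * ((R + n) * L) + 1) ^ d * (B * L⁻¹ ^ n)) := by
        refine mul_le_mul_of_nonneg_left (le_trans ?_ hdiff) (by positivity)
        gcongr
    _ = (Real.pi / 2) ^ n * (2 * ((R + n) * L) + 1) ^ d * B := by
        rw [inv_pow]
        field_simp
    _ ≤ (Real.pi / 2) ^ n * ((2 * (R + n) + 1) * L) ^ d * B := by
        gcongr
        linarith
    _ = _ := by rw [mul_pow]; ring

theorem exists_one_add_pow_mul_norm_torusKernel_le [NeZero d] {n : ℕ} (hΨ : ContDiff ℝ n Ψ)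
    (hs : HasCompactSupport Ψ) :
    ∃ C : ℝ, 0 ≤ C ∧ ∀ L : ℝ, 1 ≤ L → ∀ y : Fin d → ℝ, ‖y‖ ≤ Real.pi →
      (1 + L * ‖y‖) ^ n * ‖torusKernel (fun k => Ψ (scaledFreq L k)) y‖ ≤ C * L ^ d := by
  obtain ⟨C₀, hC₀, h₀⟩ := exists_pow_mul_norm_torusKernel_le (n := 0) (hΨ.of_le (by simp)) hs
  obtain ⟨C₁, hC₁, h₁⟩ := exists_pow_mul_norm_torusKernel_le hΨ hs
  refine ⟨2 ^ (n - 1) * (C₀ + C₁), by positivity, fun L hL y hy => ?_⟩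
  have hbounded := h₀ L hL y hy
  have hdecay := h₁ L hL y hy
  have hpow : (1 + L * ‖y‖) ^ n ≤ 2 ^ (n - 1) * (1 ^ n + (L * ‖y‖) ^ n) :=
    add_pow_le zero_le_one (by positivity) n
  rw [pow_zero, one_mul] at hbounded
  set K := ‖torusKernel (fun k => Ψ (scaledFreq L k)) y‖
  calc (1 + L * ‖y‖) ^ n * K
      ≤ 2 ^ (n - 1) * (1 ^ n + (L * ‖y‖) ^ n) * K := by gcongr
    _ = 2 ^ (n - 1) * (K + (L * ‖y‖) ^ n * K) := by ring
    _ ≤ 2 ^ (n - 1) * (C₀ * L ^ d + C₁ * L ^ d) := by gcongr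
    _ = 2 ^ (n - 1) * (C₀ + C₁) * L ^ d := by ring

end KernelDecay

section PolynomialGrowth

variable {V F : Type*} [NormedAddCommGroup V] [NormedAddCommGroup F] {q : ℝ} {x : V}

/-- Polynomial growth of degree `n` around the point `x` at the length scale `q⁻¹`. -/
def PolyGrowth (q : ℝ) (x : V) (n : ℕ) (H : V → F) (M : ℝ) : Prop :=
  ∀ y, ‖H (x + y)‖ ≤ M * (1 + q * ‖y‖) ^ n

theorem PolyGrowth.nonneg {n : ℕ} {H : V → F} {M : ℝ} (hH : PolyGrowth q x n H M) : 0 ≤ M := by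
  simpa using (norm_nonneg _).trans (hH 0)

theorem polyGrowth_of_norm_le {H : V → F} {M : ℝ} (hH : ∀ y, ‖H y‖ ≤ M) : PolyGrowth q x 0 H M :=
  fun y => by simpa using hH (x + y)

theorem PolyGrowth.mono {n m : ℕ} {H : V → F} {M M' : ℝ} (hH : PolyGrowth q x n H M) (hq : 0 ≤ q)
    (hnm : n ≤ m) (hM : M ≤ M') : PolyGrowth q x m H M' := fun y => by
  have hM' := hH.nonneg.trans hM
  have hone : 1 ≤ 1 + q * ‖y‖ := le_add_of_nonneg_right (by positivity)
  calc ‖H (x + y)‖ ≤ M * (1 + q * ‖y‖) ^ n := hH y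
    _ ≤ M' * (1 + q * ‖y‖) ^ m := by gcongr

theorem PolyGrowth.add {n : ℕ} {A B : V → F} {M N : ℝ} (hA : PolyGrowth q x n A M)
    (hB : PolyGrowth q x n B N) : PolyGrowth q x n (fun y => A y + B y) (M + N) := fun y => by
  rw [add_mul]
  exact (norm_add_le _ _).trans (add_le_add (hA y) (hB y))

theorem PolyGrowth.of_norm_le_mul {G K : Type*} [NormedAddCommGroup G] [NormedAddCommGroup K]
    {n m : ℕ} {A : V → F} {B : V → G} {H : V → K} {M N : ℝ} (hA : PolyGrowth q x n A M)
    (hB : PolyGrowth q x m B N) (hq : 0 ≤ q) (hH : ∀ y, ‖H y‖ ≤ ‖A y‖ * ‖B y‖) :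
    PolyGrowth q x (n + m) H (M * N) := fun y => by
  have hM := hA.nonneg
  calc ‖H (x + y)‖ ≤ ‖A (x + y)‖ * ‖B (x + y)‖ := hH _
    _ ≤ M * (1 + q * ‖y‖) ^ n * (N * (1 + q * ‖y‖) ^ m) :=
        mul_le_mul (hA y) (hB y) (norm_nonneg _) (by positivity)
    _ = M * N * (1 + q * ‖y‖) ^ (n + m) := by ring

theorem polyGrowth_sub_self [NormedSpace ℝ V] [NormedSpace ℝ F] {f : V → F} (hq : 0 < q)
    (hf : Differentiable ℝ f) {C : ℝ} (hC : ∀ z, ‖fderiv ℝ f z‖ ≤ C) :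
    PolyGrowth q x 1 (fun y => f y - f x) (q⁻¹ * C) := fun y => by
  have hC0 : 0 ≤ C := (norm_nonneg _).trans (hC x)
  calc ‖f (x + y) - f x‖ ≤ C * ‖y‖ := norm_add_sub_le_of_norm_fderiv_le hf hC x y
    _ = q⁻¹ * C * (q * ‖y‖) := by field_simp
    _ ≤ q⁻¹ * C * (1 + q * ‖y‖) ^ 1 := by
        rw [pow_one]
        gcongr
        exact le_add_of_nonneg_left zero_le_one

theorem polyGrowth_fderiv_mul [NormedSpace ℝ V] {n m : ℕ} {A B : V → ℝ} {α β α' β' : ℝ}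
    (hq : 0 ≤ q) (hA : Differentiable ℝ A) (hB : Differentiable ℝ B) (hgA : PolyGrowth q x n A α)
    (hgdB : PolyGrowth q x m (fderiv ℝ B) β') (hgB : PolyGrowth q x n B β)
    (hgdA : PolyGrowth q x m (fderiv ℝ A) α') :
    PolyGrowth q x (n + m) (fderiv ℝ fun y => A y * B y) (α * β' + β * α') := by
  have hprod : fderiv ℝ (fun y => A y * B y) = fun y => A y • fderiv ℝ B y + B y • fderiv ℝ A y :=
    funext fun y => fderiv_fun_mul (hA y) (hB y)
  rw [hprod]
  exact (hgA.of_norm_le_mul hgdB hq fun y => (norm_smul _ _).le).add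
    (hgB.of_norm_le_mul hgdA hq fun y => (norm_smul _ _).le)

theorem PolyGrowth.of_le_two_mul {n : ℕ} {H : V → F} {M L : ℝ} (hH : PolyGrowth q x n H M)
    (hq : 0 ≤ q) (hqL : q ≤ 2 * L) : PolyGrowth L x n H (2 ^ n * M) := fun y => by
  have hM := hH.nonneg
  calc ‖H (x + y)‖ ≤ M * (1 + q * ‖y‖) ^ n := hH y
    _ ≤ M * (2 * (1 + L * ‖y‖)) ^ n := by
        gcongr
        nlinarith [mul_le_mul_of_nonneg_right hqL (norm_nonneg y)]
    _ = 2 ^ n * M * (1 + L * ‖y‖) ^ n := by rw [mul_pow]; ring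

theorem PolyGrowth.norm_smul_le {𝕜 : Type*} [NormedField 𝕜] [NormedSpace 𝕜 F] {M B : ℝ} {y : V}
    {a b : ℕ} {H : V → 𝕜} {K : F} (hH : PolyGrowth q x a H M) (hq : 0 ≤ q)
    (hK : (1 + q * ‖y‖) ^ (b + a) * ‖K‖ ≤ B) : ‖H (x + y) • K‖ ≤ M * (B / (1 + q * ‖y‖) ^ b) := by
  have hM := hH.nonneg
  calc ‖H (x + y) • K‖ ≤ M * (1 + q * ‖y‖) ^ a * ‖K‖ := by
        rw [norm_smul]
        gcongr
        exact hH y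
    _ = M * ((1 + q * ‖y‖) ^ a * ‖K‖) := mul_assoc _ _ _
    _ ≤ M * (B / (1 + q * ‖y‖) ^ b) := by
        refine mul_le_mul_of_nonneg_left ?_ hM
        rwa [le_div_iff₀' (by positivity), ← mul_assoc, ← pow_add]

end PolynomialGrowth

section FourierMultipliers

variable {d : ℕ}

/-- The `k`-th Fourier coefficient of a function on the torus. -/
def torusCoeff (H : (Fin d → ℝ) → ℂ) (k : Fin d → ℤ) : ℂ :=
  ((2 * Real.pi) ^ d)⁻¹ • ∫ x in periodCube d, H x * torusChar k (-x)

theorem integrableOn_mul_torusChar {H : (Fin d → ℝ) → ℂ} (hc : Continuous H) (k : Fin d → ℤ) :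
    IntegrableOn (fun x => H x * torusChar k (-x)) (periodCube d) :=
  integrableOn_periodCube (by fun_prop)

theorem torusCoeff_sub {H₁ H₂ : (Fin d → ℝ) → ℂ} (h₁ : Continuous H₁) (h₂ : Continuous H₂)
    (k : Fin d → ℤ) :
    torusCoeff (fun x => H₁ x - H₂ x) k = torusCoeff H₁ k - torusCoeff H₂ k := by
  simp only [torusCoeff, sub_mul]
  rw [integral_sub (integrableOn_mul_torusChar h₁ k) (integrableOn_mul_torusChar h₂ k), smul_sub]

theorem torusCoeff_const_mul (c : ℂ) (H : (Fin d → ℝ) → ℂ) (k : Fin d → ℤ) :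
    torusCoeff (fun x => c * H x) k = c * torusCoeff H k := by
  simp only [torusCoeff, mul_assoc, integral_const_mul, mul_smul_comm]

theorem torusCoeff_mul_torusChar {H : (Fin d → ℝ) → ℂ} (hp : TorusPeriodic H) (k : Fin d → ℤ)
    (x : Fin d → ℝ) :
    torusCoeff H k * torusChar k x
      = ((2 * Real.pi) ^ d)⁻¹ • ∫ y in periodCube d, H (x + y) * torusChar k (-y) := by
  have hper := hp.comp₂ (torusPeriodic_torusChar_neg k) (· * ·)
  rw [torusCoeff, ← hper.setIntegral_periodCube_add x, smul_mul_assoc, ← integral_mul_const]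
  congr! 3
  rw [mul_assoc, ← torusChar_add_right, neg_add_rev, neg_add_cancel_right]

theorem torusCoeff_fderiv {H : (Fin d → ℝ) → ℂ} (hH : ContDiff ℝ 1 H) (hp : TorusPeriodic H)
    (w : Fin d → ℝ) (k : Fin d → ℤ) :
    torusCoeff (fun x => fderiv ℝ H x w) k
      = Complex.I * (dotCLM (fun i => (k i : ℝ)) w : ℂ) * torusCoeff H k := by
  have hchar : ContDiff ℝ 1 fun x => torusChar k (-x) := (contDiff_torusChar k).comp contDiff_neg
  have hprod : ∀ x, fderiv ℝ (fun x => H x * torusChar k (-x)) x w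
      = fderiv ℝ H x w * torusChar k (-x)
        - Complex.I * (dotCLM (fun i => (k i : ℝ)) w : ℂ) * (H x * torusChar k (-x)) := by
    intro x
    have hneg : HasFDerivAt (fun x => torusChar k (-x)) _ x :=
      (hasFDerivAt_torusChar k (-x)).comp x (hasFDerivAt_id x).neg
    rw [((hH.differentiable one_ne_zero x).hasFDerivAt.fun_mul hneg).fderiv]
    simp only [ContinuousLinearMap.comp_neg, ContinuousLinearMap.comp_id, smul_neg, add_apply,
      neg_apply, smul_apply, ContinuousLinearMap.smulRight_apply, Complex.real_smul, smul_eq_mul]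
    ring
  have hzero := (hp.comp₂ (torusPeriodic_torusChar_neg k) (· * ·)).setIntegral_fderiv_eq_zero
    (hH.mul hchar) w
  have hcont : Continuous fun x => fderiv ℝ H x w :=
    (hH.continuous_fderiv one_ne_zero).clm_apply continuous_const
  simp only [hprod] at hzero
  rw [integral_sub (integrableOn_mul_torusChar hcont k)
    ((integrableOn_mul_torusChar hH.continuous k).const_mul _), integral_const_mul,
    sub_eq_zero] at hzero
  rw [torusCoeff, torusCoeff, hzero, mul_smul_comm]

variable {E : Type*} [NormedAddCommGroup E] [NormedSpace ℂ E]

/-- The Fourier multiplier on the torus with symbol `Ψ (· / L)`, for symbols with values in a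
complex normed space. -/
def fourierMul (Ψ : (Fin d → ℝ) → E) (L : ℝ) (H : (Fin d → ℝ) → ℂ) (x : Fin d → ℝ) : E :=
  ∑' k, (torusCoeff H k * torusChar k x) • Ψ (scaledFreq L k)

variable {Ψ : (Fin d → ℝ) → E} {L : ℝ}

theorem exists_finset_fourierMul_eq_sum (hs : HasCompactSupport Ψ) (hL : 0 < L) :
    ∃ S : Finset (Fin d → ℤ), (∀ k ∉ S, Ψ (scaledFreq L k) = 0) ∧ ∀ H, fourierMul Ψ L H
      = fun x => ∑ k ∈ S, (torusCoeff H k * torusChar k x) • Ψ (scaledFreq L k) := by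
  obtain ⟨R, -, hR⟩ := hs.exists_pos_le_norm
  have hbox := fun k => comp_scaledFreq_eq_zero (k := k) hL hR
  exact ⟨latticeBox d (R * L), hbox, fun H => funext fun x =>
    tsum_eq_sum fun k hk => by rw [hbox k hk, smul_zero]⟩

theorem fourierMul_sub (hs : HasCompactSupport Ψ) (hL : 0 < L) {H₁ H₂ : (Fin d → ℝ) → ℂ}
    (h₁ : Continuous H₁) (h₂ : Continuous H₂) (x : Fin d → ℝ) :
    fourierMul Ψ L (fun y => H₁ y - H₂ y) x = fourierMul Ψ L H₁ x - fourierMul Ψ L H₂ x := by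
  obtain ⟨S, -, hS⟩ := exists_finset_fourierMul_eq_sum hs hL
  simp only [hS, torusCoeff_sub h₁ h₂, sub_mul, sub_smul, Finset.sum_sub_distrib]

theorem fourierMul_const_mul (c : ℂ) (H : (Fin d → ℝ) → ℂ) (x : Fin d → ℝ) :
    fourierMul Ψ L (fun y => c * H y) x = c • fourierMul Ψ L H x := by
  simp only [fourierMul, torusCoeff_const_mul, mul_assoc, mul_smul c, tsum_const_smul'']

variable [NormedSpace ℝ E]

/-- The symbol `ξ ↦ i ξ ⊗ Ψ ξ` of the derivative of the multiplier with symbol `Ψ`. -/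
def derivSymbol (Ψ : (Fin d → ℝ) → E) (ξ : Fin d → ℝ) : (Fin d → ℝ) →L[ℝ] E :=
  (dotCLM ξ).smulRight (Complex.I • Ψ ξ)

theorem hasCompactSupport_derivSymbol (hs : HasCompactSupport Ψ) :
    HasCompactSupport (derivSymbol Ψ) :=
  hs.mono fun ξ hξ h => hξ (by simp [derivSymbol, h])

variable [IsScalarTower ℝ ℂ E]

theorem fourierMul_eq_integral [CompleteSpace E] (hs : HasCompactSupport Ψ) (hL : 0 < L)
    {H : (Fin d → ℝ) → ℂ} (hc : Continuous H) (hp : TorusPeriodic H) (x : Fin d → ℝ) :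
    fourierMul Ψ L H x = ((2 * Real.pi) ^ d)⁻¹ •
      ∫ y in periodCube d, H (x + y) • torusKernel (fun k => Ψ (scaledFreq L k)) (-y) := by
  obtain ⟨S, hS, hsum⟩ := exists_finset_fourierMul_eq_sum hs hL
  have hkernel : ∀ y, torusKernel (fun k => Ψ (scaledFreq L k)) (-y)
      = ∑ k ∈ S, torusChar k (-y) • Ψ (scaledFreq L k) := fun y =>
    tsum_eq_sum fun k hk => by simp only [hS k hk, smul_zero]
  simp only [hsum, hkernel, torusCoeff_mul_torusChar hp, Finset.smul_sum, smul_smul]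
  rw [integral_finsetSum _ fun k _ => integrableOn_periodCube (by fun_prop), Finset.smul_sum]
  simp only [integral_smul_const, smul_assoc]

theorem setIntegral_pow_mul_comp_smul_le {g : (Fin d → ℝ) → ℝ} (hg : Integrable g)
    (hg0 : ∀ y, 0 ≤ g y) (hL : 0 < L) (s : Set (Fin d → ℝ)) :
    ∫ y in s, L ^ d * g (L • y) ≤ ∫ y, g y := by
  calc ∫ y in s, L ^ d * g (L • y) ≤ ∫ y, L ^ d * g (L • y) :=
        setIntegral_le_integral ((hg.comp_smul hL.ne').const_mul _)
          (Filter.Eventually.of_forall fun y => mul_nonneg (by positivity) (hg0 _))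
    _ = ∫ y, g y := by
        rw [integral_const_mul, Measure.integral_comp_smul, Module.finrank_fin_fun,
          abs_of_pos (by positivity), smul_eq_mul, mul_inv_cancel_left₀ (by positivity)]

theorem exists_norm_fourierMul_le [NeZero d] [CompleteSpace E] (a : ℕ)
    (hΨ : ContDiff ℝ (d + 1 + a : ℕ) Ψ) (hs : HasCompactSupport Ψ) :
    ∃ C : ℝ, 0 ≤ C ∧ ∀ L : ℝ, 1 ≤ L → ∀ H : (Fin d → ℝ) → ℂ, Continuous H → TorusPeriodic H →
      ∀ x M, PolyGrowth L x a H M → ‖fourierMul Ψ L H x‖ ≤ C * M := by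
  obtain ⟨C, hC, hK⟩ := exists_one_add_pow_mul_norm_torusKernel_le hΨ hs
  set g : (Fin d → ℝ) → ℝ := fun y => (1 + ‖y‖) ^ (-((d + 1 : ℕ) : ℝ))
  have hg : Integrable g := integrable_one_add_norm (by simp)
  have hg0 : ∀ y, 0 ≤ g y := fun y => by positivity
  refine ⟨((2 * Real.pi) ^ d)⁻¹ * (C * ∫ y, g y), ?_, fun L hL H hc hp x M hH => ?_⟩
  · exact mul_nonneg (by positivity) (mul_nonneg hC (integral_nonneg hg0))
  have hL0 : 0 < L := by linarith
  have hM := hH.nonneg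
  have hpoint : ∀ y ∈ periodCube d,
      ‖H (x + y) • torusKernel (fun k => Ψ (scaledFreq L k)) (-y)‖
        ≤ M * C * (L ^ d * g (L • y)) := fun y hy => by
    have hKy := hK L hL (-y) (by rw [norm_neg]; exact norm_le_pi_of_mem_periodCube hy)
    rw [norm_neg] at hKy
    refine (hH.norm_smul_le hL0.le hKy).trans_eq ?_
    simp only [g, norm_smul, Real.norm_of_nonneg hL0.le]
    rw [Real.rpow_neg (by positivity), Real.rpow_natCast, div_eq_mul_inv]
    ring
  rw [fourierMul_eq_integral hs hL0 hc hp, norm_smul, Real.norm_of_nonneg (by positivity),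
    mul_assoc]
  refine mul_le_mul_of_nonneg_left ?_ (by positivity)
  calc _ ≤ ∫ y in periodCube d, M * C * (L ^ d * g (L • y)) :=
        norm_integral_le_of_norm_le
          (((hg.comp_smul hL0.ne').const_mul _).const_mul _).integrableOn
          ((ae_restrict_iff' measurableSet_periodCube).2 (Filter.Eventually.of_forall hpoint))
    _ ≤ M * C * ∫ y, g y := by
        rw [integral_const_mul]
        exact mul_le_mul_of_nonneg_left (setIntegral_pow_mul_comp_smul_le hg hg0 hL0 _)
          (mul_nonneg hM hC)
    _ = C * (∫ y, g y) * M := by ring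

theorem contDiff_derivSymbol {n : WithTop ℕ∞} (hΨ : ContDiff ℝ n Ψ) :
    ContDiff ℝ n (derivSymbol Ψ) :=
  contDiff_dotCLM.smulRight (hΨ.const_smul Complex.I)

theorem hasFDerivAt_fourierMul (hs : HasCompactSupport Ψ) (hL : 0 < L) (H : (Fin d → ℝ) → ℂ)
    (x : Fin d → ℝ) :
    HasFDerivAt (fourierMul Ψ L H) (L • fourierMul (derivSymbol Ψ) L H x) x := by
  obtain ⟨S, hS, hsum⟩ := exists_finset_fourierMul_eq_sum hs hL
  have hsum' : fourierMul (derivSymbol Ψ) L H x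
      = ∑ k ∈ S, (torusCoeff H k * torusChar k x) • derivSymbol Ψ (scaledFreq L k) :=
    tsum_eq_sum fun k hk => by simp [derivSymbol, hS k hk]
  rw [hsum, hsum', Finset.smul_sum]
  refine HasFDerivAt.fun_sum fun k _ => ?_
  have hfreq : (fun i => (k i : ℝ)) = L • scaledFreq L k := by
    ext i
    simp [scaledFreq, mul_div_cancel₀ _ hL.ne']
  have hterm := ((hasFDerivAt_torusChar k x).const_mul (torusCoeff H k)).smul_const
    (Ψ (scaledFreq L k))
  refine hterm.congr_fderiv ?_
  ext1 w
  rw [hfreq, dotCLM_smul]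
  simp only [derivSymbol, ContinuousLinearMap.smulRight_apply, smul_apply, smul_eq_mul,
    Complex.real_smul, ← algebraMap_smul ℂ (_ : ℝ) (_ : E), smul_smul, Complex.coe_algebraMap,
    Complex.ofReal_mul]
  congr 1
  ring

theorem contDiff_fourierMul (hs : HasCompactSupport Ψ) (hL : 0 < L) (H : (Fin d → ℝ) → ℂ)
    {n : WithTop ℕ∞} : ContDiff ℝ n (fourierMul Ψ L H) := by
  obtain ⟨S, -, hS⟩ := exists_finset_fourierMul_eq_sum hs hL
  rw [hS]
  exact ContDiff.sum fun k _ => (contDiff_const.mul (contDiff_torusChar k)).smul contDiff_const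

theorem fderiv_fourierMul_apply (hs : HasCompactSupport Ψ) (hL : 0 < L) {H : (Fin d → ℝ) → ℂ}
    (hH : ContDiff ℝ 1 H) (hp : TorusPeriodic H) (x w : Fin d → ℝ) :
    fderiv ℝ (fourierMul Ψ L H) x w = fourierMul Ψ L (fun y => fderiv ℝ H y w) x := by
  obtain ⟨S, -, hsum⟩ := exists_finset_fourierMul_eq_sum hs hL
  have hterm := fun k : Fin d → ℤ =>
    ((hasFDerivAt_torusChar k x).const_mul (torusCoeff H k)).smul_const (Ψ (scaledFreq L k))
  rw [hsum, hsum, (HasFDerivAt.fun_sum fun k _ => hterm k).fderiv, sum_apply]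
  refine Finset.sum_congr rfl fun k _ => ?_
  rw [torusCoeff_fderiv hH hp]
  simp only [ContinuousLinearMap.smulRight_apply, smul_apply, smul_eq_mul, Complex.real_smul]
  congr 1
  ring

theorem exists_norm_iteratedFDeriv_fourierMul_le [NeZero d] [CompleteSpace E] (n a : ℕ)
    (hΨ : ContDiff ℝ (d + 1 + a : ℕ) Ψ) (hs : HasCompactSupport Ψ) :
    ∃ C : ℝ, 0 ≤ C ∧ ∀ L : ℝ, 1 ≤ L → ∀ H : (Fin d → ℝ) → ℂ, Continuous H → TorusPeriodic H →
      ∀ x M, PolyGrowth L x a H M →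
        ‖iteratedFDeriv ℝ n (fourierMul Ψ L H) x‖ ≤ C * M * L ^ n := by
  induction n generalizing E with
  | zero => simpa using exists_norm_fourierMul_le a hΨ hs
  | succ n ih =>
    obtain ⟨C, hC, h⟩ := ih (contDiff_derivSymbol hΨ) (hasCompactSupport_derivSymbol hs)
    refine ⟨C, hC, fun L hL H hc hp x M hH => ?_⟩
    have hL0 : 0 < L := by linarith
    have hderiv : fderiv ℝ (fourierMul Ψ L H) = L • fourierMul (derivSymbol Ψ) L H :=
      funext fun y => (hasFDerivAt_fourierMul hs hL0 H y).fderiv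
    rw [← norm_iteratedFDeriv_fderiv, hderiv, iteratedFDeriv_const_smul_apply
      (contDiff_fourierMul (hasCompactSupport_derivSymbol hs) hL0 H).contDiffAt, norm_smul,
      Real.norm_of_nonneg hL0.le]
    calc L * ‖iteratedFDeriv ℝ n (fourierMul (derivSymbol Ψ) L H) x‖ ≤ L * (C * M * L ^ n) := by
          gcongr
          exact h L hL H hc hp x M hH
      _ = C * M * L ^ (n + 1) := by ring

end FourierMultipliers

section DerivativeBounds

variable {V E F G : Type*} [NormedAddCommGroup V] [NormedSpace ℝ V] [NormedAddCommGroup E]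
  [NormedSpace ℝ E] [NormedAddCommGroup F] [NormedSpace ℝ F] [NormedAddCommGroup G]
  [NormedSpace ℝ G] {q α β : ℝ} {m : ℕ} {x : V}

/-- `A` is `C ^ m` and its derivatives at `x` up to order `m` are those of a function of size `α`
varying at the length scale `q⁻¹`. -/
structure DerivBound (q : ℝ) (m : ℕ) (x : V) (A : V → E) (α : ℝ) : Prop where
  contDiff : ContDiff ℝ m A
  norm_le : ∀ n ≤ m, ‖iteratedFDeriv ℝ n A x‖ ≤ α * q ^ n

namespace DerivBound

theorem nonneg {A : V → E} (hA : DerivBound q m x A α) : 0 ≤ α := by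
  simpa using (norm_nonneg _).trans (hA.norm_le 0 m.zero_le)

theorem of_succ {A : V → E} (hA : DerivBound q (m + 1) x A α) : DerivBound q m x A α :=
  ⟨hA.contDiff.of_le (by exact_mod_cast m.le_succ), fun n hn => hA.norm_le n (hn.trans m.le_succ)⟩

theorem sub {A B : V → E} (hA : DerivBound q m x A α) (hB : DerivBound q m x B β) :
    DerivBound q m x (fun y => A y - B y) (α + β) := by
  refine ⟨hA.contDiff.sub hB.contDiff, fun n hn => ?_⟩
  have hn' : (n : WithTop ℕ∞) ≤ m := by exact_mod_cast hn
  have hsub : iteratedFDeriv ℝ n (fun y => A y - B y) x = _ := iteratedFDeriv_sub_apply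
    (hA.contDiff.of_le hn').contDiffAt (hB.contDiff.of_le hn').contDiffAt
  rw [hsub, add_mul]
  exact (norm_sub_le _ _).trans (add_le_add (hA.norm_le n hn) (hB.norm_le n hn))

theorem bilinear (T : E →L[ℝ] F →L[ℝ] G) (hT : ‖T‖ ≤ 1) {A : V → E} {B : V → F} (hq : 0 ≤ q)
    (hA : DerivBound q m x A α) (hB : DerivBound q m x B β) :
    DerivBound q m x (fun y => T (A y) (B y)) (2 ^ m * (α * β)) := by
  refine ⟨(T.contDiff.comp hA.contDiff).clm_apply hB.contDiff, fun n hn => ?_⟩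
  have hα := hA.nonneg
  have hβ := hB.nonneg
  have hterm : ∀ i ∈ Finset.range (n + 1), n.choose i * ‖iteratedFDeriv ℝ i A x‖
      * ‖iteratedFDeriv ℝ (n - i) B x‖ ≤ n.choose i * (α * β * q ^ n) := fun i hi => by
    have hin : i ≤ n := Nat.lt_succ_iff.1 (Finset.mem_range.1 hi)
    calc _ ≤ n.choose i * (α * q ^ i) * (β * q ^ (n - i)) := by
          gcongr
          · exact hA.norm_le i (hin.trans hn)
          · exact hB.norm_le (n - i) ((Nat.sub_le _ _).trans hn)
      _ = n.choose i * (α * β * (q ^ i * q ^ (n - i))) := by ring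
      _ = n.choose i * (α * β * q ^ n) := by rw [← pow_add, Nat.add_sub_cancel' hin]
  calc _ ≤ ∑ i ∈ Finset.range (n + 1), (n.choose i : ℝ) * ‖iteratedFDeriv ℝ i A x‖
          * ‖iteratedFDeriv ℝ (n - i) B x‖ :=
        T.norm_iteratedFDeriv_le_of_bilinear_of_le_one hA.contDiff hB.contDiff x
          (by exact_mod_cast hn) hT
    _ ≤ ∑ i ∈ Finset.range (n + 1), (n.choose i : ℝ) * (α * β * q ^ n) := Finset.sum_le_sum hterm
    _ = 2 ^ n * (α * β * q ^ n) := by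
        rw [← Finset.sum_mul, ← Nat.cast_sum, Nat.sum_range_choose, Nat.cast_pow, Nat.cast_ofNat]
    _ ≤ 2 ^ m * (α * β * q ^ n) := by
        gcongr
        exact one_le_two
    _ = _ := by ring

theorem mul {A B : V → ℝ} (hq : 0 ≤ q) (hA : DerivBound q m x A α) (hB : DerivBound q m x B β) :
    DerivBound q m x (fun y => A y * B y) (2 ^ m * (α * β)) :=
  bilinear (ContinuousLinearMap.mul ℝ ℝ) (ContinuousLinearMap.opNorm_mul_le ℝ ℝ) hq hA hB

theorem clm_apply {A : V → E →L[ℝ] F} {u : V → E} (hq : 0 ≤ q) (hA : DerivBound q m x A α)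
    (hu : DerivBound q m x u β) : DerivBound q m x (fun y => A y (u y)) (2 ^ m * (α * β)) :=
  bilinear (ContinuousLinearMap.id ℝ (E →L[ℝ] F)) ContinuousLinearMap.norm_id_le hq hA hu

theorem fderiv {A : V → E} (hA : DerivBound q (m + 1) x A α) :
    DerivBound q m x (fderiv ℝ A) (α * q) := by
  refine ⟨hA.contDiff.fderiv_right (by push_cast; rfl), fun n hn => ?_⟩
  rw [norm_iteratedFDeriv_fderiv, mul_assoc, ← pow_succ']
  exact hA.norm_le (n + 1) (Nat.succ_le_succ hn)

theorem sub_self_of_pos {A : V → E} (hα : 0 ≤ α) (hA : ContDiff ℝ m A)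
    (hpos : ∀ n, 1 ≤ n → n ≤ m → ‖iteratedFDeriv ℝ n A x‖ ≤ α * q ^ n) :
    DerivBound q m x (fun y => A y - A x) α := by
  refine ⟨hA.sub contDiff_const, fun n hn => ?_⟩
  rcases Nat.eq_zero_or_pos n with rfl | hn0
  · simpa using hα
  · have hsub : iteratedFDeriv ℝ n (fun y => A y - A x) x = _ := iteratedFDeriv_sub_apply
      (hA.of_le (by exact_mod_cast hn)).contDiffAt contDiff_const.contDiffAt
    rw [hsub, iteratedFDeriv_const_of_ne hn0.ne', Pi.zero_apply, sub_zero]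
    exact hpos n hn0 hn

end DerivBound

end DerivativeBounds

section LowPass

theorem two_zpow_Jof_bounds {q : ℝ} (hq : 1 ≤ q) :
    1 ≤ (2 : ℝ) ^ Jof q ∧ (2 : ℝ) ^ Jof q ≤ q ∧ q ≤ 2 * (2 : ℝ) ^ Jof q := by
  have hlog : (2 : ℝ) ^ Real.logb 2 q = q :=
    Real.rpow_logb two_pos (by norm_num) (zero_lt_one.trans_le hq)
  refine ⟨one_le_zpow₀ one_le_two (Int.floor_nonneg.2 (Real.logb_nonneg one_lt_two hq)), ?_, ?_⟩
  · rw [← Real.rpow_intCast]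
    exact (Real.rpow_le_rpow_of_exponent_le one_le_two (Int.floor_le _)).trans_eq hlog
  · rw [← zpow_one_add₀ two_ne_zero, ← Real.rpow_intCast, Int.cast_add, Int.cast_one, add_comm]
    exact hlog.symm.trans_le
      (Real.rpow_le_rpow_of_exponent_le one_le_two (Int.lt_floor_add_one _).le)

variable {d : ℕ} {φ : (Fin d → ℝ) → ℝ} {S : ℝ}

/-- The cutoff `P_{≤S}` to frequencies below the largest power of two `2 ^ J ≤ S`, acting on real
functions on the `d`-dimensional torus. -/
def lowPass (φ : (Fin d → ℝ) → ℝ) (S : ℝ) (H : (Fin d → ℝ) → ℝ) (x : Fin d → ℝ) : ℝ :=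
  (fourierMul (fun ξ => (φ ξ : ℂ)) ((2 : ℝ) ^ Jof S) (fun y => (H y : ℂ)) x).re

theorem hasCompactSupport_ofReal (hs : HasCompactSupport φ) :
    HasCompactSupport fun ξ => (φ ξ : ℂ) :=
  hs.comp_left (g := fun r : ℝ => (r : ℂ)) Complex.ofReal_zero

theorem contDiff_lowPass (hs : HasCompactSupport φ) (H : (Fin d → ℝ) → ℝ) {n : WithTop ℕ∞} :
    ContDiff ℝ n (lowPass φ S H) :=
  Complex.reCLM.contDiff.comp
    (contDiff_fourierMul (hasCompactSupport_ofReal hs) (by positivity) _)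

theorem lowPass_sub (hs : HasCompactSupport φ) {H₁ H₂ : (Fin d → ℝ) → ℝ} (h₁ : Continuous H₁)
    (h₂ : Continuous H₂) (x : Fin d → ℝ) :
    lowPass φ S (fun y => H₁ y - H₂ y) x = lowPass φ S H₁ x - lowPass φ S H₂ x := by
  simp only [lowPass, Complex.ofReal_sub]
  rw [fourierMul_sub (hasCompactSupport_ofReal hs) (by positivity) (by fun_prop) (by fun_prop),
    Complex.sub_re]

theorem lowPass_const_mul (c : ℝ) (H : (Fin d → ℝ) → ℝ) (x : Fin d → ℝ) :
    lowPass φ S (fun y => c * H y) x = c * lowPass φ S H x := by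
  simp only [lowPass, Complex.ofReal_mul, fourierMul_const_mul, smul_eq_mul, Complex.re_ofReal_mul]

theorem fderiv_lowPass_apply (hs : HasCompactSupport φ) {H : (Fin d → ℝ) → ℝ}
    (hH : ContDiff ℝ 1 H) (hp : TorusPeriodic H) (x w : Fin d → ℝ) :
    fderiv ℝ (lowPass φ S H) x w = lowPass φ S (fun y => fderiv ℝ H y w) x := by
  have hsC := hasCompactSupport_ofReal hs
  have hL : (0 : ℝ) < 2 ^ Jof S := by positivity
  have hofReal : ∀ y, fderiv ℝ (fun z => (H z : ℂ)) y w = (fderiv ℝ H y w : ℂ) := fun y => by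
    have hcomp : HasFDerivAt (fun z => (H z : ℂ)) _ y :=
      Complex.ofRealCLM.hasFDerivAt.comp y (hH.differentiable one_ne_zero y).hasFDerivAt
    rw [hcomp.fderiv]
    rfl
  have hre : HasFDerivAt (lowPass φ S H) _ x := Complex.reCLM.hasFDerivAt.comp x
    ((contDiff_fourierMul hsC hL _ (n := 1)).differentiable one_ne_zero x).hasFDerivAt
  have hcomm := fderiv_fourierMul_apply hsC hL (Complex.ofRealCLM.contDiff.comp hH)
    (fun y n => congrArg Complex.ofReal (hp y n)) x w
  rw [lowPass, hre.fderiv]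
  simp only [← hofReal]
  exact congrArg Complex.re hcomm

theorem exists_derivBound_lowPass [NeZero d] (m a : ℕ) (hφ : ContDiff ℝ (d + 1 + a : ℕ) φ)
    (hs : HasCompactSupport φ) :
    ∃ C : ℝ, 0 < C ∧ ∀ q : ℝ, 1 ≤ q → ∀ H : (Fin d → ℝ) → ℝ, Continuous H → TorusPeriodic H →
      ∀ x M, PolyGrowth q x a H M → DerivBound q m x (lowPass φ q H) (C * M) := by
  have hsC := hasCompactSupport_ofReal hs
  choose C hC hbound using fun n => exists_norm_iteratedFDeriv_fourierMul_le n a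
    (Complex.ofRealCLM.contDiff.comp hφ) hsC
  have hsum0 : 0 ≤ ∑ n ∈ Finset.range (m + 1), C n := Finset.sum_nonneg fun n _ => hC n
  refine ⟨(∑ n ∈ Finset.range (m + 1), C n + 1) * 2 ^ a, by positivity,
    fun q hq H hc hp x M hH => ⟨contDiff_lowPass hs H, fun n hn => ?_⟩⟩
  obtain ⟨hL1, hLq, hqL⟩ := two_zpow_Jof_bounds hq
  set L := (2 : ℝ) ^ Jof q
  have hM := hH.nonneg
  have hHC : PolyGrowth L x a (fun y => (H y : ℂ)) (2 ^ a * M) := fun y => by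
    rw [Complex.norm_real]
    exact hH.of_le_two_mul (by linarith) hqL y
  have hCn : C n ≤ ∑ n ∈ Finset.range (m + 1), C n + 1 :=
    (Finset.single_le_sum (fun n _ => hC n) (Finset.mem_range.2 (Nat.lt_succ_iff.2 hn))).trans
      (le_add_of_nonneg_right zero_le_one)
  calc ‖iteratedFDeriv ℝ n (Complex.reCLM ∘ fourierMul (fun ξ => (φ ξ : ℂ)) L fun y => (H y : ℂ)) x‖
      ≤ ‖Complex.reCLM‖ * ‖iteratedFDeriv ℝ n (fourierMul (fun ξ => (φ ξ : ℂ)) L _) x‖ :=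
        Complex.reCLM.norm_iteratedFDeriv_comp_left
          (contDiff_fourierMul hsC (by linarith) _).contDiffAt le_rfl
    _ ≤ C n * (2 ^ a * M) * L ^ n := by
        rw [Complex.reCLM_norm, one_mul]
        exact hbound n L hL1 _ (by fun_prop) (fun y k => congrArg Complex.ofReal (hp y k)) x _ hHC
    _ ≤ (∑ n ∈ Finset.range (m + 1), C n + 1) * (2 ^ a * M) * q ^ n := by
        gcongr
    _ = _ := by ring

end LowPass

section AdvectionCommutator

variable {d : ℕ} {φ : (Fin d → ℝ) → ℝ} {S : ℝ} {u : (Fin d → ℝ) → Fin d → ℝ}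
  {F G : (Fin d → ℝ) → ℝ}

/-- The commutator `[u·∇, P_{≤S}] F` on the `d`-dimensional torus. -/
def advComm (φ : (Fin d → ℝ) → ℝ) (S : ℝ) (u : (Fin d → ℝ) → Fin d → ℝ) (F : (Fin d → ℝ) → ℝ)
    (x : Fin d → ℝ) : ℝ :=
  fderiv ℝ (lowPass φ S F) x (u x) - lowPass φ S (fun y => fderiv ℝ F y (u y)) x

theorem advComm_sub_const (hs : HasCompactSupport φ) (hu : Continuous u) (hF : ContDiff ℝ 1 F)
    (hp : TorusPeriodic F) (b x : Fin d → ℝ) :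
    advComm φ S (fun y => u y - b) F x = advComm φ S u F x := by
  have hdF := hF.continuous_fderiv one_ne_zero
  simp only [advComm, map_sub]
  rw [lowPass_sub hs (hdF.clm_apply hu) (hdF.clm_apply continuous_const),
    fderiv_lowPass_apply hs hF hp x b]
  ring

theorem advComm_mul_sub_const (hs : HasCompactSupport φ) (hu : Continuous u)
    (hF : ContDiff ℝ 1 F) (hG : ContDiff ℝ 1 G) (c : ℝ) (x : Fin d → ℝ) :
    advComm φ S u (fun y => F y * (G y - c)) x
      = advComm φ S u (fun y => F y * G y) x - c * advComm φ S u F x := by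
  have hFG := hF.mul hG
  have hexpand : (fun y => F y * (G y - c)) = fun y => F y * G y - c * F y :=
    funext fun y => by ring
  have hderiv : ∀ y, fderiv ℝ (fun y => F y * G y - c * F y) y (u y)
      = fderiv ℝ (fun y => F y * G y) y (u y) - c * fderiv ℝ F y (u y) := fun y => by
    have hFy := hF.differentiable one_ne_zero y
    rw [fderiv_fun_sub (hFG.differentiable one_ne_zero y) (hFy.const_mul c), fderiv_const_mul hFy]
    rfl
  have hlow : lowPass φ S (fun y => F y * G y - c * F y)
      = fun y => lowPass φ S (fun y => F y * G y) y - c * lowPass φ S F y := funext fun y => by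
    rw [lowPass_sub hs hFG.continuous (hF.continuous.const_mul c), lowPass_const_mul]
  have hlowF := (contDiff_lowPass hs F (S := S) (n := 1)).differentiable one_ne_zero x
  have hlowFG := (contDiff_lowPass hs (fun y => F y * G y) (S := S) (n := 1)).differentiable
    one_ne_zero x
  simp only [advComm, hexpand, hderiv, hlow]
  rw [fderiv_fun_sub hlowFG (hlowF.const_mul c), fderiv_const_mul hlowF,
    lowPass_sub hs ((hFG.continuous_fderiv one_ne_zero).clm_apply hu)
      (((hF.continuous_fderiv one_ne_zero).clm_apply hu).const_mul c), lowPass_const_mul]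
  simp only [sub_apply, smul_apply, smul_eq_mul]
  ring

theorem advComm_mul_sub_advComm_mul_sub_const (hs : HasCompactSupport φ) (hu : Continuous u)
    (hF : ContDiff ℝ 1 F) (hpF : TorusPeriodic F) (hG : ContDiff ℝ 1 G) (hpG : TorusPeriodic G)
    (b : Fin d → ℝ) (c : ℝ) (x : Fin d → ℝ) :
    advComm φ S (fun y => u y - b) (fun y => F y * (G y - c)) x
        - advComm φ S (fun y => u y - b) F x * (G x - c)
      = advComm φ S u (fun y => F y * G y) x - advComm φ S u F x * G x := by
  rw [advComm_sub_const hs hu (hF.mul (hG.sub contDiff_const))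
      fun y n => congrArg₂ (fun a b => a * (b - c)) (hpF y n) (hpG y n),
    advComm_sub_const hs hu hF hpF, advComm_mul_sub_const hs hu hF hG]
  ring

theorem exists_derivBound_advComm [NeZero d] (m : ℕ) (hφ : ContDiff ℝ (d + 3 : ℕ) φ)
    (hs : HasCompactSupport φ) :
    ∃ C : ℝ, 0 < C ∧ ∀ q : ℝ, 1 ≤ q → ∀ U F, TorusPeriodic U → ContDiff ℝ 1 F →
      TorusPeriodic F → ∀ x vF M, DerivBound q m x U vF → PolyGrowth q x 1 U vF →
      PolyGrowth q x 1 F (q⁻¹ * M) → PolyGrowth q x 1 (fderiv ℝ F) M →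
        DerivBound q m x (advComm φ q U F) (C * (vF * M)) := by
  obtain ⟨C, hC, hlow⟩ := exists_derivBound_lowPass (m + 1) 2 hφ hs
  refine ⟨(2 ^ m + 1) * C, by positivity, fun q hq U F hpU hF hpF x vF M hU hgU hgF hgdF => ?_⟩
  have hq0 : 0 < q := by linarith
  have hdF := hF.continuous_fderiv one_ne_zero
  have houter : DerivBound q m x (fun y => fderiv ℝ (lowPass φ q F) y (U y))
      (2 ^ m * (C * (q⁻¹ * M) * q * vF)) :=
    (hlow q hq F hF.continuous hpF x _
      (hgF.mono hq0.le one_le_two le_rfl)).fderiv.clm_apply hq0.le hU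
  have hinner : DerivBound q m x (lowPass φ q fun y => fderiv ℝ F y (U y)) (C * (M * vF)) :=
    (hlow q hq _ (hdF.clm_apply hU.contDiff.continuous)
      ((torusPeriodic_fderiv hpF).comp₂ hpU fun A w => A w) x _
      (hgdF.of_norm_le_mul hgU hq0.le fun y => (fderiv ℝ F y).le_opNorm (U y))).of_succ
  have hconst : (2 ^ m + 1) * C * (vF * M) = 2 ^ m * (C * (q⁻¹ * M) * q * vF) + C * (M * vF) := by
    field_simp
  rw [hconst]
  exact houter.sub hinner

theorem exists_derivBound_advComm_mul_sub [NeZero d] (m : ℕ) (hφ : ContDiff ℝ (d + 3 : ℕ) φ)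
    (hs : HasCompactSupport φ) :
    ∃ C : ℝ, 0 < C ∧ ∀ q : ℝ, 1 ≤ q → ∀ U F Γ, TorusPeriodic U → ContDiff ℝ 1 F →
      TorusPeriodic F → ContDiff ℝ 1 Γ → TorusPeriodic Γ → ∀ x vF gF Cf Cdf,
      DerivBound q m x U vF → PolyGrowth q x 1 U vF →
      DerivBound q m x Γ (q⁻¹ * gF) → PolyGrowth q x 1 Γ (q⁻¹ * gF) →
      (∀ y, ‖fderiv ℝ Γ y‖ ≤ gF) → (∀ y, |F y| ≤ Cf) → (∀ y, ‖fderiv ℝ F y‖ ≤ Cdf) →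
        DerivBound q m x (fun y => advComm φ q U (fun z => F z * Γ z) y - advComm φ q U F y * Γ y)
          (C * (q⁻¹ * Cdf + Cf) * vF * gF) := by
  obtain ⟨C, hC, hcomm⟩ := exists_derivBound_advComm m hφ hs
  refine ⟨(1 + 2 ^ m) * C, by positivity, ?_⟩
  intro q hq U F Γ hpU hF hpF hΓ hpΓ x vF gF Cf Cdf hU hgU hDΓ hgΓ hdΓ hF0 hdF
  have hq0 : 0 < q := by linarith
  have hgF : PolyGrowth q x 0 F Cf := polyGrowth_of_norm_le hF0
  have hgdF : PolyGrowth q x 0 (fderiv ℝ F) Cdf := polyGrowth_of_norm_le hdF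
  have hgdΓ : PolyGrowth q x 0 (fderiv ℝ Γ) gF := polyGrowth_of_norm_le hdΓ
  have hCf := hgF.nonneg
  have hCdf := hgdF.nonneg
  have hgF0 := hgdΓ.nonneg
  have hgFΓ : PolyGrowth q x 1 (fun y => F y * Γ y) (q⁻¹ * ((q⁻¹ * Cdf + Cf) * gF)) :=
    (hgF.of_norm_le_mul hgΓ hq0.le fun y => norm_mul_le _ _).mono hq0.le le_rfl (by
      rw [add_mul, mul_add, mul_left_comm]
      exact le_add_of_nonneg_left (by positivity))
  have hgdFΓ : PolyGrowth q x 1 (fderiv ℝ fun y => F y * Γ y) ((q⁻¹ * Cdf + Cf) * gF) := by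
    have hconst : (q⁻¹ * Cdf + Cf) * gF = Cf * gF + q⁻¹ * gF * Cdf := by ring
    rw [hconst]
    exact polyGrowth_fderiv_mul hq0.le (hF.differentiable one_ne_zero)
      (hΓ.differentiable one_ne_zero) (hgF.mono hq0.le zero_le_one le_rfl) hgdΓ hgΓ hgdF
  have hFΓ := hcomm q hq U _ hpU (hF.mul hΓ) (hpF.comp₂ hpΓ (· * ·)) x vF _ hU hgU hgFΓ hgdFΓ
  have hFonly := hcomm q hq U F hpU hF hpF x vF (Cdf + q * Cf) hU hgU
    (hgF.mono hq0.le zero_le_one (by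
      rw [mul_add, inv_mul_cancel_left₀ hq0.ne']
      exact le_add_of_nonneg_left (by positivity)))
    (hgdF.mono hq0.le zero_le_one (le_add_of_nonneg_right (by positivity)))
  have hconst : (1 + 2 ^ m) * C * (q⁻¹ * Cdf + Cf) * vF * gF = C * (vF * ((q⁻¹ * Cdf + Cf) * gF))
      + 2 ^ m * (C * (vF * (Cdf + q * Cf)) * (q⁻¹ * gF)) := by
    field_simp
  rw [hconst]
  exact hFΓ.sub (hFonly.mul hq0.le hDΓ)

theorem exists_derivBound_advComm_mul_sub_advComm_mul [NeZero d] {m : ℕ} (hm : 1 ≤ m)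
    (hφ : ContDiff ℝ (d + 3 : ℕ) φ) (hs : HasCompactSupport φ) :
    ∃ C : ℝ, 0 < C ∧ ∀ q : ℝ, 1 ≤ q → ∀ u F G, ContDiff ℝ m u → TorusPeriodic u →
      ContDiff ℝ 1 F → TorusPeriodic F → ContDiff ℝ m G → TorusPeriodic G → ∀ vF gF Cf Cdf,
      (∀ x n, 1 ≤ n → n ≤ m → ‖iteratedFDeriv ℝ n u x‖ ≤ vF * q ^ n) →
      (∀ x n, 1 ≤ n → n ≤ m → ‖iteratedFDeriv ℝ n G x‖ ≤ gF) →
      (∀ x, |F x| ≤ Cf) → (∀ x, ‖fderiv ℝ F x‖ ≤ Cdf) → ∀ x,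
        DerivBound q m x (fun y => advComm φ q u (fun z => F z * G z) y - advComm φ q u F y * G y)
          (C * (q⁻¹ * Cdf + Cf) * vF * gF) := by
  obtain ⟨C, hC, hbound⟩ := exists_derivBound_advComm_mul_sub m hφ hs
  refine ⟨C, hC, ?_⟩
  intro q hq u F G hu hpu hF hpF hG hpG vF gF Cf Cdf hub hGb hFb hdFb x
  have hq0 : 0 < q := by linarith
  have hm1 : (1 : WithTop ℕ∞) ≤ m := by exact_mod_cast hm
  have hu1 := hu.of_le hm1
  have hG1 := hG.of_le hm1
  have hdu : ∀ y, ‖fderiv ℝ u y‖ ≤ q * vF := fun y => by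
    simpa only [norm_iteratedFDeriv_one, pow_one, mul_comm] using hub y 1 le_rfl hm
  have hdG : ∀ y, ‖fderiv ℝ G y‖ ≤ gF := fun y => by
    simpa only [norm_iteratedFDeriv_one] using hGb y 1 le_rfl hm
  have hvF : 0 ≤ vF := nonneg_of_mul_nonneg_right ((norm_nonneg _).trans (hdu x)) hq0
  have hgF : 0 ≤ gF := (norm_nonneg _).trans (hdG x)
  have hDu : DerivBound q m x (fun y => u y - u x) vF := .sub_self_of_pos hvF hu (hub x)
  have hDG : DerivBound q m x (fun y => G y - G x) (q⁻¹ * gF) :=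
    .sub_self_of_pos (by positivity) hG fun n hn hnm => by
      have hqn : q ≤ q ^ n := le_self_pow₀ hq (Nat.one_le_iff_ne_zero.1 hn)
      calc ‖iteratedFDeriv ℝ n G x‖ ≤ gF := hGb x n hn hnm
        _ = q⁻¹ * gF * q := by field_simp
        _ ≤ q⁻¹ * gF * q ^ n := by gcongr
  have hgu : PolyGrowth q x 1 (fun y => u y - u x) vF := by
    simpa only [inv_mul_cancel_left₀ hq0.ne'] using
      polyGrowth_sub_self hq0 (hu1.differentiable one_ne_zero) hdu
  simp only [← advComm_mul_sub_advComm_mul_sub_const hs hu.continuous hF hpF hG1 hpG (u x) (G x)]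
  exact hbound q hq _ F _ (fun y n => congrArg (· - u x) (hpu y n)) hF hpF
    (hG1.sub contDiff_const) (fun y n => congrArg (· - G x) (hpG y n)) x vF gF Cf Cdf hDu hgu hDG
    (polyGrowth_sub_self hq0 (hG1.differentiable one_ne_zero) hdG)
    (by simpa only [fderiv_sub_const] using hdG) hFb hdFb

end AdvectionCommutator

section ThreeDimensionalTorus

theorem Pse_eq_lowPass (φ : V3 → ℝ) (S : ℝ) (H : V3 → ℝ) : Pse φ S H = lowPass φ S H := by
  funext x
  have hcoeff : ∀ k, fcoef H k = torusCoeff (fun y => (H y : ℂ)) k := fun k => by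
    simp only [fcoef, torusCoeff, torusChar, map_neg, dotCLM_apply, Complex.ofReal_neg, mul_neg]
    rfl
  simp only [Pse, lowPass, fourierMul, hcoeff, torusChar, dotCLM_apply, smul_eq_mul]
  congr 1
  exact tsum_congr fun k => by rw [mul_assoc, mul_comm]; rfl

theorem fderiv_apply_eq_sum_e3 (F : V3 → ℝ) (x w : V3) :
    fderiv ℝ F x w = ∑ i, w i * fderiv ℝ F x (e3 i) := by
  conv_lhs => rw [pi_eq_sum_univ' w]
  simp [e3, map_sum]

theorem commAdv_eq_advComm (φ : V3 → ℝ) (ℓ : ℝ) (v : ℝ × V3 → V3) (F : ℝ × V3 → ℝ) (t : ℝ)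
    (x : V3) :
    commAdv φ ℓ v F (t, x) = advComm φ ℓ⁻¹ (fun y => v (t, y)) (fun y => F (t, y)) x := by
  simp only [commAdv, advComm, pX, PseT, Pse_eq_lowPass, fderiv_apply_eq_sum_e3 _ _ (v _)]

theorem norm_le_enorm3 (x : V3) : ‖x‖ ≤ enorm3 x :=
  (pi_norm_le_iff_of_nonneg (Real.sqrt_nonneg _)).2 fun i => Real.abs_le_sqrt
    (Finset.single_le_sum (f := fun i => x i ^ 2) (fun i _ => sq_nonneg (x i)) (Finset.mem_univ i))

theorem IsCutoff.hasCompactSupport {φ : V3 → ℝ} (hφ : IsCutoff φ) : HasCompactSupport φ :=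
  HasCompactSupport.intro (isCompact_closedBall 0 2) fun x hx =>
    hφ.2.2.2 x ((by simpa using hx : 2 < ‖x‖).le.trans (norm_le_enorm3 x))

end ThreeDimensionalTorus

theorem statement15_general {d : ℕ} [NeZero d] {φ : (Fin d → ℝ) → ℝ}
    (hφ : ContDiff ℝ (d + 3 : ℕ) φ) (hs : HasCompactSupport φ) {Nbar : ℕ} (hNbar : 1 ≤ Nbar) :
    ∃ C : ℝ, 0 < C ∧ ∀ ℓ : ℝ, 0 < ℓ → ℓ ≤ 1 →
      ∀ (v : (Fin d → ℝ) → Fin d → ℝ) (g : (Fin d → ℝ) → ℝ),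
        ContDiff ℝ Nbar v → TorusPeriodic v → ContDiff ℝ Nbar g → TorusPeriodic g →
      ∀ vF gF : ℝ,
        (∀ x n, 1 ≤ n → n ≤ Nbar → ‖iteratedFDeriv ℝ n v x‖ ≤ ℓ ^ (-(n : ℝ)) * vF) →
        (∀ x n, 1 ≤ n → n ≤ Nbar → ‖iteratedFDeriv ℝ n g x‖ ≤ gF) →
      ∀ f : (Fin d → ℝ) → ℝ, ContDiff ℝ 1 f → TorusPeriodic f →
      ∀ Cf Cdf : ℝ, (∀ x, |f x| ≤ Cf) → (∀ x, ‖iteratedFDeriv ℝ 1 f x‖ ≤ Cdf) →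
      ∀ N ≤ Nbar, ∀ x, ∀ n ≤ N,
        ‖iteratedFDeriv ℝ n (fun y => advComm φ ℓ⁻¹ v (fun z => f z * g z) y
            - advComm φ ℓ⁻¹ v f y * g y) x‖
          ≤ C * (ℓ ^ ((1 : ℝ) - N) * Cdf + ℓ ^ (-(N : ℝ)) * Cf) * vF * gF := by
  obtain ⟨C, hC, hbound⟩ := exists_derivBound_advComm_mul_sub_advComm_mul hNbar hφ hs
  refine ⟨C, hC, ?_⟩
  intro ℓ hℓ0 hℓ1 v g hv hpv hg hpg vF gF hvb hgb f hf hpf Cf Cdf hfb hdfb N hN x n hn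
  have hq : 1 ≤ ℓ⁻¹ := (one_le_inv₀ hℓ0).2 hℓ1
  have hpow : ∀ k : ℕ, ℓ ^ (-(k : ℝ)) = ℓ⁻¹ ^ k := fun k => by
    rw [Real.rpow_neg hℓ0.le, Real.rpow_natCast, inv_pow]
  have hD := hbound ℓ⁻¹ hq v f g hv hpv hf hpf hg hpg vF gF Cf Cdf
    (fun y k hk hkN => by simpa only [hpow, mul_comm] using hvb y k hk hkN) hgb hfb
    (fun y => by simpa only [norm_iteratedFDeriv_one] using hdfb y) x
  calc _ ≤ C * (ℓ⁻¹⁻¹ * Cdf + Cf) * vF * gF * ℓ⁻¹ ^ n := hD.norm_le n (hn.trans hN)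
    _ ≤ C * (ℓ⁻¹⁻¹ * Cdf + Cf) * vF * gF * ℓ⁻¹ ^ N :=
        mul_le_mul_of_nonneg_left (pow_le_pow_right₀ hq hn) hD.nonneg
    _ = C * (ℓ ^ ((1 : ℝ) - N) * Cdf + ℓ ^ (-(N : ℝ)) * Cf) * vF * gF := by
        rw [hpow, sub_eq_add_neg, Real.rpow_add hℓ0, hpow, Real.rpow_one, inv_inv]
        ring

/-- **Double commutator estimate.**  If `‖v‖_N ≤ ℓ^{-N} v_F` and `‖g‖_N ≤ g_F` for
`1 ≤ N ≤ N̄`, then for every smooth `f` and `0 ≤ N ≤ N̄`,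
`‖[v·∇, P_{≤ℓ⁻¹}](fg) - ([v·∇, P_{≤ℓ⁻¹}]f)·g‖_N ≤ C (ℓ^{1-N} ‖∇f‖₀ + ℓ^{-N} ‖f‖₀) v_F g_F`,
with `C = C(N̄, φ)`. -/
theorem statement15 (φ : V3 → ℝ) (hφ : IsCutoff φ) (Nbar : ℕ) (hNbar : 1 ≤ Nbar) :
    ∃ C : ℝ, 0 < C ∧
      ∀ T : ℝ, 0 < T →
      ∀ ℓ : ℝ, 0 < ℓ → ℓ < 1 →
      ∀ (v : ℝ × V3 → V3) (g : ℝ × V3 → ℝ),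
        ContDiff ℝ (⊤ : ℕ∞) v → PerSpaceT v → ContDiff ℝ (⊤ : ℕ∞) g → PerSpaceT g →
      ∀ vF gF : ℝ, 0 < vF → 0 < gF →
        (∀ t ∈ Set.Icc (0 : ℝ) T, ∀ x : V3, ∀ n : ℕ, 1 ≤ n → n ≤ Nbar →
          ‖iteratedFDeriv ℝ n (fun y => v (t, y)) x‖ ≤ ℓ ^ (-(n : ℝ)) * vF) →
        (∀ t ∈ Set.Icc (0 : ℝ) T, ∀ x : V3, ∀ n : ℕ, 1 ≤ n → n ≤ Nbar →
          ‖iteratedFDeriv ℝ n (fun y => g (t, y)) x‖ ≤ gF) →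
      ∀ f : ℝ × V3 → ℝ, ContDiff ℝ (⊤ : ℕ∞) f → PerSpaceT f →
      ∀ Cf Cdf : ℝ,
        (∀ t ∈ Set.Icc (0 : ℝ) T, ∀ x : V3, |f (t, x)| ≤ Cf) →
        (∀ t ∈ Set.Icc (0 : ℝ) T, ∀ x : V3,
          ‖iteratedFDeriv ℝ 1 (fun y => f (t, y)) x‖ ≤ Cdf) →
      ∀ N : ℕ, N ≤ Nbar →
      ∀ t ∈ Set.Icc (0 : ℝ) T, ∀ x : V3, ∀ n : ℕ, n ≤ N →
        ‖iteratedFDeriv ℝ n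
            (fun y => commAdv φ ℓ v (fun s => f s * g s) (t, y)
              - commAdv φ ℓ v f (t, y) * g (t, y)) x‖
          ≤ C * (ℓ ^ ((1 : ℝ) - N) * Cdf + ℓ ^ (-(N : ℝ)) * Cf) * vF * gF := by
  obtain ⟨C, hC, hbound⟩ := statement15_general (contDiff_infty.1 hφ.1 _) hφ.hasCompactSupport hNbar
  refine ⟨C, hC, fun T _ ℓ hℓ0 hℓ1 v g hv hpv hg hpg vF gF _ _ hvb hgb f hf hpf Cf Cdf hfb hdfb
    N hN t ht x n hn => ?_⟩
  have hslice : ContDiff ℝ (⊤ : ℕ∞) fun y : V3 => (t, y) := contDiff_prodMk_right t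
  simp only [commAdv_eq_advComm]
  exact hbound ℓ hℓ0 hℓ1.le _ _ (contDiff_infty.1 (hv.comp hslice) Nbar) (hpv t)
    (contDiff_infty.1 (hg.comp hslice) Nbar) (hpg t) vF gF (hvb t ht) (hgb t ht) _
    (contDiff_infty.1 (hf.comp hslice) 1) (hpf t) Cf Cdf (hfb t ht) (hdfb t ht) N hN x n hn
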